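/- arXiv:1909.00220 — 2 statements merged into one kernel-verified Lean document; each statement's English description precedes it below -/
import Mathlib

section
/- Let l ≥ 1 and k ≥ 0 be integers, ρ₀ ≥ 0, and z ∈ ℂ with Re z ≥ 0. There exists a constant c > 0 such that for all R > ρ₀² and all a > 0, ( ∫_{‖H‖ > a} ( Σ_{|α| ≤ 2k} |∂_H^α [ 𝒥_{z+l/2}(√(R − ρ₀²) ‖H‖) ]| )² dH )^{1/2} ≤ c ( Σ_{m=0}^{2k} (R − ρ₀²)^{m/2} ) (R − ρ₀²)^{−(Re z/2 + (l+1)/4)} a^{−Re z − 1/2}. -/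
open Real MeasureTheory

/-- 𝒥_ν(t) = (2^ν Γ(ν+1/2) Γ(1/2))^{−1} ∫_{−1}^1 e^{ist} (1−s²)^{ν−1/2} ds,
which for t > 0 equals t^{−ν} J_ν(t). -/
noncomputable def Jmod (ν : ℂ) (t : ℝ) : ℂ :=
  ((2 : ℂ) ^ ν * Complex.Gamma (ν + 1 / 2) * Complex.Gamma (1 / 2))⁻¹ *
    ∫ s in (-1 : ℝ)..1, Complex.exp (Complex.I * s * t) * ((1 - s ^ 2 : ℝ) : ℂ) ^ (ν - 1 / 2)

/-- Iterated partial derivative of a function on ℝ^l along a list of coordinate directions. -/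
noncomputable def mderiv {l : ℕ} : List (Fin l) → (EuclideanSpace ℝ (Fin l) → ℂ) →
    EuclideanSpace ℝ (Fin l) → ℂ
  | [], f => f
  | i :: L, f => fun x => fderiv ℝ (mderiv L f) x (EuclideanSpace.single i 1)

/-- The partial derivative ∂^α of a function on ℝ^l associated with the multi-index
α : Fin l → ℕ (α i derivatives in the i-th coordinate direction). -/
noncomputable def partialD {l : ℕ} (α : Fin l → ℕ) (f : EuclideanSpace ℝ (Fin l) → ℂ) :
    EuclideanSpace ℝ (Fin l) → ℂ :=
  mderiv ((List.finRange l).flatMap fun i => List.replicate (α i) i) f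

/-!
The function `√t J_ν(t) = t^(ν + 1/2) 𝒥_ν(t)` solves `u'' = (-1 + (ν² - 1/4)/t²) u`, an
integrable perturbation of `u'' = -u`, so it stays bounded and
`‖𝒥_ν(t)‖ ≤ C (1 + t)^(-Re ν - 1/2)`. Since `𝒥_ν'(t) = -t 𝒥_{ν+1}(t)`, every iterated partial
derivative of `𝒥_ν(‖x‖)` is a combination of products of at most `j` linear forms with
`𝒥_{ν+j}(‖x‖)`: the growth of the forms is absorbed by the better decay of `𝒥_{ν+j}`, and all
derivatives decay like `𝒥_ν(‖x‖)` itself. Replacing `x` by `√T x` costs a factor `T^(|α|/2)`, and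
`‖x‖^(-2 Re ν - 1)` is integrable at infinity on `ℝ^l` for `ν = z + l/2` as soon as `Re z > -1/2`.
-/

section Energy

lemma le_mul_exp_of_hasDerivAt_le {f f' q Q : ℝ → ℝ} {a : ℝ}
    (hf : ∀ t, a ≤ t → HasDerivAt f (f' t) t) (hQ : ∀ t, a ≤ t → HasDerivAt Q (q t) t)
    (hle : ∀ t, a ≤ t → f' t ≤ q t * f t) {t : ℝ} (ht : a ≤ t) :
    f t ≤ f a * exp (Q t - Q a) := by
  have hderiv : ∀ s, a ≤ s → HasDerivAt (fun s => f s * exp (-Q s))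
      (f' s * exp (-Q s) + f s * (exp (-Q s) * -q s)) s :=
    fun s hs => (hf s hs).mul (hQ s hs).neg.exp
  have hanti : AntitoneOn (fun s => f s * exp (-Q s)) (Set.Ici a) := by
    refine antitoneOn_of_hasDerivWithinAt_nonpos (convex_Ici a)
      (fun s hs => (hderiv s hs).continuousAt.continuousWithinAt)
      (fun s hs => (hderiv s (interior_subset hs)).hasDerivWithinAt) fun s hs => ?_
    have := mul_le_mul_of_nonneg_right (hle s (interior_subset hs)) (exp_pos (-Q s)).le
    linarith
  have h : f t * exp (-Q t) ≤ f a * exp (-Q a) := hanti Set.self_mem_Ici ht ht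
  calc f t = f t * exp (-Q t) * exp (Q t) := by rw [mul_assoc, ← exp_add]; simp
    _ ≤ f a * exp (-Q a) * exp (Q t) := by gcongr
    _ = f a * exp (Q t - Q a) := by rw [mul_assoc, ← exp_add]; ring_nf

/- For `w = 0` the energy `‖u‖² + ‖v‖²` of the oscillator `u'' = -u` is conserved; here its
derivative is `2⟪v, w⟫ ≤ 2q‖u‖‖v‖ ≤ q(‖u‖² + ‖v‖²)`. -/
lemma norm_sq_add_norm_sq_le_mul_exp {F : Type*} [NormedAddCommGroup F] [InnerProductSpace ℝ F]
    {u v w : ℝ → F} {q Q : ℝ → ℝ} {a : ℝ} (hu : ∀ t, a ≤ t → HasDerivAt u (v t) t)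
    (hv : ∀ t, a ≤ t → HasDerivAt v (-u t + w t) t) (hQ : ∀ t, a ≤ t → HasDerivAt Q (q t) t)
    (hq : ∀ t, a ≤ t → 0 ≤ q t) (hw : ∀ t, a ≤ t → ‖w t‖ ≤ q t * ‖u t‖) {t : ℝ} (ht : a ≤ t) :
    ‖u t‖ ^ 2 + ‖v t‖ ^ 2 ≤ (‖u a‖ ^ 2 + ‖v a‖ ^ 2) * exp (Q t - Q a) := by
  refine le_mul_exp_of_hasDerivAt_le (f := fun t => ‖u t‖ ^ 2 + ‖v t‖ ^ 2)
    (fun s hs => (hu s hs).norm_sq.add (hv s hs).norm_sq) hQ (fun s hs => ?_) ht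
  have hvw : inner ℝ (v s) (w s) ≤ ‖v s‖ * (q s * ‖u s‖) :=
    (real_inner_le_norm _ _).trans (by gcongr; exact hw s hs)
  have hsq := mul_nonneg (hq s hs) (sq_nonneg (‖u s‖ - ‖v s‖))
  rw [inner_add_right, inner_neg_right, real_inner_comm (u s) (v s)]
  linarith

end Energy

section PoissonIntegral

lemma norm_exp_I_mul_mul (s t : ℝ) : ‖Complex.exp (Complex.I * s * t)‖ = 1 := by
  rw [mul_assoc, ← Complex.ofReal_mul, mul_comm, Complex.norm_exp_ofReal_mul_I]

lemma intervalIntegrable_exp_mul {w : ℝ → ℂ} {a b : ℝ} (hw : IntervalIntegrable w volume a b)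
    (t : ℝ) :
    IntervalIntegrable (fun s : ℝ => Complex.exp (Complex.I * s * t) * w s) volume a b :=
  hw.continuousOn_mul (by fun_prop)

lemma hasDerivAt_integral_exp_mul {w : ℝ → ℂ} {a b : ℝ} (hw : IntervalIntegrable w volume a b)
    (t : ℝ) :
    HasDerivAt (fun t : ℝ => ∫ s in a..b, Complex.exp (Complex.I * s * t) * w s)
      (∫ s in a..b, Complex.exp (Complex.I * s * t) * (Complex.I * s * w s)) t := by
  have hw' : IntervalIntegrable (fun s : ℝ => Complex.I * s * w s) volume a b :=
    hw.continuousOn_mul (by fun_prop)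
  refine (intervalIntegral.hasDerivAt_integral_of_dominated_loc_of_deriv_le
    (F := fun t s : ℝ => Complex.exp (Complex.I * s * t) * w s)
    (F' := fun t s : ℝ => Complex.exp (Complex.I * s * t) * (Complex.I * s * w s))
    (bound := fun s => ‖Complex.I * s * w s‖) Filter.univ_mem
    (.of_forall fun t => (intervalIntegrable_exp_mul hw t).def'.aestronglyMeasurable)
    (intervalIntegrable_exp_mul hw t)
    (intervalIntegrable_exp_mul hw' t).def'.aestronglyMeasurable
    (.of_forall fun s _ t _ => by rw [norm_mul, norm_exp_I_mul_mul, one_mul]) hw'.norm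
    (.of_forall fun s _ t _ => ?_)).2
  have hlin : HasDerivAt (fun t : ℝ => Complex.I * s * (t : ℂ)) (Complex.I * s * 1) t :=
    Complex.ofRealCLM.hasDerivAt.const_mul _
  exact (hlin.cexp.mul_const (w s)).congr_deriv (by ring)

lemma norm_integral_exp_mul_le {w : ℝ → ℂ} {a b : ℝ} (hab : a ≤ b) (t : ℝ) :
    ‖∫ s in a..b, Complex.exp (Complex.I * s * t) * w s‖ ≤ ∫ s in a..b, ‖w s‖ := by
  refine (intervalIntegral.norm_integral_le_integral_norm hab).trans_eq ?_
  simp only [norm_mul, norm_exp_I_mul_mul, one_mul]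

variable {μ : ℂ}

/- The substitution `s = 2x - 1` turns `(1 - s²)^μ` into the Beta integrand `4^μ x^μ (1 - x)^μ`. -/
lemma intervalIntegrable_one_sub_sq_cpow (hμ : -1 < μ.re) :
    IntervalIntegrable (fun s : ℝ => ((1 - s ^ 2 : ℝ) : ℂ) ^ μ) volume (-1) 1 := by
  have hre : 0 < (μ + 1).re := by rw [Complex.add_re, Complex.one_re]; linarith
  have hbeta := (((Complex.betaIntegral_convergent hre hre).const_mul
    ((4 : ℝ) ^ μ : ℂ)).comp_mul_left (c := 1 / 2)).comp_add_right 1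
  have hends : (0 : ℝ) / (1 / 2) - 1 = -1 ∧ (1 : ℝ) / (1 / 2) - 1 = 1 := by norm_num
  rw [hends.1, hends.2] at hbeta
  refine hbeta.congr fun s hs => ?_
  rw [Set.uIoc_of_le (by norm_num)] at hs
  have hadd : 0 ≤ 1 / 2 * (s + 1) := by linarith [hs.1]
  have hsub : 0 ≤ 1 - 1 / 2 * (s + 1) := by linarith [hs.2]
  have hfour : (4 : ℝ) * ((1 / 2 * (s + 1)) * (1 - 1 / 2 * (s + 1))) = 1 - s ^ 2 := by ring
  simp only [add_sub_cancel_right]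
  rw [← hfour, Complex.ofReal_mul 4, Complex.mul_cpow_ofReal_nonneg zero_le_four (by positivity),
    Complex.ofReal_mul _ (1 - _), Complex.mul_cpow_ofReal_nonneg hadd hsub, Complex.ofReal_sub,
    Complex.ofReal_one]

/-- The Poisson integral `∫_{-1}^1 e^{ist} (1 - s²)^μ ds`, which is `Jmod (μ + 1/2)` without its
normalising constant. -/
noncomputable def poissonIntegral (μ : ℂ) (t : ℝ) : ℂ :=
  ∫ s in (-1 : ℝ)..1, Complex.exp (Complex.I * s * t) * ((1 - s ^ 2 : ℝ) : ℂ) ^ μ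

lemma hasDerivAt_one_sub_sq_cpow (μ : ℂ) {s : ℝ} (hs : s ∈ Set.Ioo (-1 : ℝ) 1) :
    HasDerivAt (fun s : ℝ => ((1 - s ^ 2 : ℝ) : ℂ) ^ (μ + 1))
      (-2 * (μ + 1) * (s * ((1 - s ^ 2 : ℝ) : ℂ) ^ μ)) s := by
  have hpos : 0 < 1 - s ^ 2 := by nlinarith [hs.1, hs.2]
  have hinner : HasDerivAt (fun s : ℝ => ((1 - s ^ 2 : ℝ) : ℂ)) ((-(2 * s) : ℝ) : ℂ) s :=
    HasDerivAt.ofReal_comp (by simpa using (hasDerivAt_pow 2 s).const_sub 1)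
  have hpow := (hasDerivAt_id ((1 - s ^ 2 : ℝ) : ℂ)).cpow_const (c := μ + 1)
    (Or.inl (by simpa only [id, Complex.ofReal_re] using hpos))
  refine (hpow.comp_of_eq s hinner rfl).congr_deriv ?_
  simp only [id, add_sub_cancel_right]
  push_cast
  ring

lemma continuous_one_sub_sq_cpow (hμ : 0 < μ.re) :
    Continuous fun s : ℝ => ((1 - s ^ 2 : ℝ) : ℂ) ^ μ :=
  (Complex.continuous_ofReal_cpow_const hμ).comp (f := fun s : ℝ => 1 - s ^ 2) (by fun_prop)

lemma one_sub_sq_cpow_add_one (μ : ℂ) {s : ℝ} (hs : s ∈ Set.Ioo (-1 : ℝ) 1) :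
    ((1 - s ^ 2 : ℝ) : ℂ) ^ (μ + 1) = ((1 - s ^ 2 : ℝ) : ℂ) ^ μ * ((1 - s ^ 2 : ℝ) : ℂ) := by
  have hpos : 0 < 1 - s ^ 2 := by nlinarith [hs.1, hs.2]
  rw [Complex.cpow_add _ _ (Complex.ofReal_ne_zero.2 hpos.ne'), Complex.cpow_one]

lemma add_one_ne_zero_of_neg_one_lt_re (hμ : -1 < μ.re) : μ + 1 ≠ 0 := fun h => by
  have := congrArg Complex.re h
  simp only [Complex.add_re, Complex.one_re, Complex.zero_re] at this
  linarith

/- Integration by parts: the boundary terms of `e^{ist} (1 - s²)^(μ + 1)` vanish. -/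
lemma integral_exp_mul_I_mul_one_sub_sq_cpow (hμ : -1 < μ.re) (t : ℝ) :
    ∫ s in (-1 : ℝ)..1, Complex.exp (Complex.I * s * t) *
        (Complex.I * s * ((1 - s ^ 2 : ℝ) : ℂ) ^ μ) =
      -(t / (2 * (μ + 1))) * poissonIntegral (μ + 1) t := by
  have hre : 0 < (μ + 1).re := by rw [Complex.add_re, Complex.one_re]; linarith
  have hne := add_one_ne_zero_of_neg_one_lt_re hμ
  have hint := intervalIntegrable_exp_mul
    (intervalIntegrable_one_sub_sq_cpow (neg_one_lt_zero.trans hre)) t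
  have hint' := intervalIntegrable_exp_mul
    ((intervalIntegrable_one_sub_sq_cpow hμ).continuousOn_mul
      (g := fun s : ℝ => Complex.I * s) (by fun_prop)) t
  have hparts := intervalIntegral.integral_eq_sub_of_hasDerivAt_of_le (a := -1) (b := 1)
    (f := fun s : ℝ => Complex.exp (Complex.I * s * t) * ((1 - s ^ 2 : ℝ) : ℂ) ^ (μ + 1))
    (f' := fun s : ℝ =>
      Complex.I * t * (Complex.exp (Complex.I * s * t) * ((1 - s ^ 2 : ℝ) : ℂ) ^ (μ + 1)) +
      2 * (μ + 1) * Complex.I * (Complex.exp (Complex.I * s * t) *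
        (Complex.I * s * ((1 - s ^ 2 : ℝ) : ℂ) ^ μ)))
    (by norm_num)
    (Continuous.mul (by fun_prop) (continuous_one_sub_sq_cpow hre)).continuousOn
    (fun s hs => by
      have hlin : HasDerivAt (fun s : ℝ => Complex.I * (s : ℂ) * t) (Complex.I * 1 * t) s :=
        (Complex.ofRealCLM.hasDerivAt.const_mul _).mul_const _
      refine (hlin.cexp.mul (hasDerivAt_one_sub_sq_cpow μ hs)).congr_deriv ?_
      linear_combination (-2 * (μ + 1) * Complex.exp (Complex.I * s * t) * s *
        ((1 - s ^ 2 : ℝ) : ℂ) ^ μ) * Complex.I_sq)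
    ((hint.const_mul _).add (hint'.const_mul _))
  rw [intervalIntegral.integral_add (hint.const_mul _) (hint'.const_mul _),
    intervalIntegral.integral_const_mul, intervalIntegral.integral_const_mul,
    ← poissonIntegral] at hparts
  simp only [one_pow, neg_sq, sub_self, Complex.ofReal_zero, Complex.zero_cpow hne,
    mul_zero] at hparts
  generalize (∫ s in (-1 : ℝ)..1, _ : ℂ) = X at hparts ⊢
  field_simp
  linear_combination -Complex.I * hparts +
    (t * poissonIntegral (μ + 1) t + 2 * (μ + 1) * X) * Complex.I_sq

lemma hasDerivAt_poissonIntegral (hμ : -1 < μ.re) (t : ℝ) :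
    HasDerivAt (poissonIntegral μ) (-(t / (2 * (μ + 1))) * poissonIntegral (μ + 1) t) t :=
  (hasDerivAt_integral_exp_mul (intervalIntegrable_one_sub_sq_cpow hμ) t).congr_deriv
    (integral_exp_mul_I_mul_one_sub_sq_cpow hμ t)

/- The differentiated function is the derivative of `poissonIntegral μ`, and a second
differentiation under the integral sign produces `(is)² = (1 - s²) - 1`. -/
lemma hasDerivAt_mul_poissonIntegral (hμ : -1 < μ.re) (t : ℝ) :
    HasDerivAt (fun t : ℝ => -(t / (2 * (μ + 1))) * poissonIntegral (μ + 1) t)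
      (poissonIntegral (μ + 1) t - poissonIntegral μ t) t := by
  have hint := intervalIntegrable_one_sub_sq_cpow hμ
  have hint' := intervalIntegrable_one_sub_sq_cpow (μ := μ + 1)
    (by rw [Complex.add_re, Complex.one_re]; linarith)
  simp_rw [← integral_exp_mul_I_mul_one_sub_sq_cpow hμ]
  refine (hasDerivAt_integral_exp_mul (hint.continuousOn_mul
    (g := fun s : ℝ => Complex.I * s) (by fun_prop)) t).congr_deriv ?_
  rw [poissonIntegral, poissonIntegral, ← intervalIntegral.integral_sub
    (intervalIntegrable_exp_mul hint' t) (intervalIntegrable_exp_mul hint t)]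
  refine intervalIntegral.integral_congr_Ioo_of_le (by norm_num) fun s hs => ?_
  rw [one_sub_sq_cpow_add_one μ hs]
  push_cast
  linear_combination (Complex.exp (Complex.I * s * t) * s ^ 2 *
    (1 - (s : ℂ) ^ 2) ^ μ) * Complex.I_sq

end PoissonIntegral

section Jmod

variable {ν : ℂ}

lemma Jmod_eq_mul_poissonIntegral (ν : ℂ) (t : ℝ) :
    Jmod ν t = ((2 : ℂ) ^ ν * Complex.Gamma (ν + 1 / 2) * Complex.Gamma (1 / 2))⁻¹ *
      poissonIntegral (ν - 1 / 2) t :=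
  rfl

lemma neg_one_lt_re_sub_half (hν : -1 / 2 < ν.re) : -1 < (ν - 1 / 2).re := by
  have hhalf : (1 / 2 : ℂ).re = 1 / 2 := by norm_num
  rw [Complex.sub_re, hhalf]
  linarith

lemma Jmod_add_one_eq_mul_poissonIntegral (hν : -1 / 2 < ν.re) (t : ℝ) :
    Jmod (ν + 1) t = ((2 : ℂ) ^ ν * Complex.Gamma (ν + 1 / 2) * Complex.Gamma (1 / 2))⁻¹ *
      (poissonIntegral (ν - 1 / 2 + 1) t / (2 * (ν - 1 / 2 + 1))) := by
  have hne : ν + 1 / 2 ≠ 0 := by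
    convert add_one_ne_zero_of_neg_one_lt_re (neg_one_lt_re_sub_half hν) using 1
    ring
  rw [Jmod_eq_mul_poissonIntegral, Complex.cpow_add _ _ two_ne_zero, Complex.cpow_one,
    add_right_comm, Complex.Gamma_add_one _ hne, add_sub_right_comm,
    show ν - 1 / 2 + 1 = ν + 1 / 2 by ring]
  simp only [mul_inv, div_eq_mul_inv]
  ring

lemma hasDerivAt_Jmod (hν : -1 / 2 < ν.re) (t : ℝ) :
    HasDerivAt (Jmod ν) (t * -Jmod (ν + 1) t) t := by
  refine ((hasDerivAt_poissonIntegral (neg_one_lt_re_sub_half hν) t).const_mul _).congr_deriv ?_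
  rw [Jmod_add_one_eq_mul_poissonIntegral hν]
  ring

lemma hasDerivAt_mul_Jmod_add_one (hν : -1 / 2 < ν.re) (t : ℝ) :
    HasDerivAt (fun t : ℝ => t * Jmod (ν + 1) t)
      (Jmod ν t - (2 * ν + 1) * Jmod (ν + 1) t) t := by
  have hne := add_one_ne_zero_of_neg_one_lt_re (neg_one_lt_re_sub_half hν)
  have hcoef : (2 * ν + 1) * (poissonIntegral (ν - 1 / 2 + 1) t / (2 * (ν - 1 / 2 + 1))) =
      poissonIntegral (ν - 1 / 2 + 1) t := by
    rw [show 2 * ν + 1 = 2 * (ν - 1 / 2 + 1) by ring,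
      mul_div_cancel₀ _ (mul_ne_zero two_ne_zero hne)]
  have hmul := (hasDerivAt_mul_poissonIntegral (neg_one_lt_re_sub_half hν) t).const_mul
    (-((2 : ℂ) ^ ν * Complex.Gamma (ν + 1 / 2) * Complex.Gamma (1 / 2))⁻¹)
  refine (hmul.congr_of_eventuallyEq (.of_forall fun t => ?_)).congr_deriv ?_
  · rw [Jmod_add_one_eq_mul_poissonIntegral hν]
    ring
  · rw [Jmod_add_one_eq_mul_poissonIntegral hν, Jmod_eq_mul_poissonIntegral, mul_left_comm, hcoef]
    ring

lemma exists_norm_Jmod_le_const (ν : ℂ) : ∃ C, ∀ t, ‖Jmod ν t‖ ≤ C :=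
  ⟨_, fun t => (norm_mul_le _ _).trans
    (mul_le_mul_of_nonneg_left (norm_integral_exp_mul_le (by norm_num) t) (norm_nonneg _))⟩

lemma hasDerivAt_ofReal_cpow_mul (c : ℂ) {f : ℝ → ℂ} {f' : ℂ} {t : ℝ} (ht : 0 < t)
    (hf : HasDerivAt f f' t) :
    HasDerivAt (fun t : ℝ => (t : ℂ) ^ c * f t) ((t : ℂ) ^ c * (c / t * f t + f')) t := by
  have ht' : (t : ℂ) ≠ 0 := Complex.ofReal_ne_zero.2 ht.ne'
  have hpow := ((hasDerivAt_id (t : ℂ)).cpow_const (c := c)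
    (Or.inl (by simpa only [id, Complex.ofReal_re] using ht))).comp_ofReal
  refine (hpow.mul hf).congr_deriv ?_
  simp only [id, Complex.cpow_sub _ _ ht', Complex.cpow_one]
  field_simp

lemma hasDerivAt_cpow_mul_Jmod (hν : -1 / 2 < ν.re) {t : ℝ} (ht : 0 < t) :
    HasDerivAt (fun t : ℝ => (t : ℂ) ^ (ν + 1 / 2) * Jmod ν t)
      ((t : ℂ) ^ (ν + 1 / 2) * ((ν + 1 / 2) / t * Jmod ν t - t * Jmod (ν + 1) t)) t :=
  (hasDerivAt_ofReal_cpow_mul _ ht (hasDerivAt_Jmod hν t)).congr_deriv (by ring)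

/- `u(t) = t^(ν + 1/2) 𝒥_ν(t) = √t J_ν(t)` solves the normal form `u'' = (-1 + (ν² - 1/4)/t²) u` of
Bessel's equation. -/
lemma hasDerivAt_cpow_mul_sub_Jmod (hν : -1 / 2 < ν.re) {t : ℝ} (ht : 0 < t) :
    HasDerivAt
      (fun t : ℝ => (t : ℂ) ^ (ν + 1 / 2) * ((ν + 1 / 2) / t * Jmod ν t - t * Jmod (ν + 1) t))
      (-((t : ℂ) ^ (ν + 1 / 2) * Jmod ν t) +
        (ν ^ 2 - 1 / 4) / t ^ 2 * ((t : ℂ) ^ (ν + 1 / 2) * Jmod ν t)) t := by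
  have ht' : (t : ℂ) ≠ 0 := Complex.ofReal_ne_zero.2 ht.ne'
  have hdiv : HasDerivAt (fun t : ℝ => (ν + 1 / 2) / (t : ℂ))
      ((ν + 1 / 2) * -((t : ℂ) ^ 2)⁻¹) t :=
    ((hasDerivAt_inv ht').const_mul _).comp_ofReal
  refine (hasDerivAt_ofReal_cpow_mul _ ht
    ((hdiv.mul (hasDerivAt_Jmod hν t)).sub (hasDerivAt_mul_Jmod_add_one hν t))).congr_deriv ?_
  simp only [Pi.mul_apply, Pi.sub_apply]
  field_simp
  ring

/- The factor `(ν² - 1/4)/t²` perturbing `u'' = -u` is integrable at infinity. -/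
lemma exists_rpow_mul_norm_Jmod_le (hν : -1 / 2 < ν.re) :
    ∃ C, ∀ t, 1 ≤ t → t ^ (ν.re + 1 / 2) * ‖Jmod ν t‖ ≤ C := by
  set κ := ‖ν ^ 2 - 1 / 4‖
  set u : ℝ → ℂ := fun t => (t : ℂ) ^ (ν + 1 / 2) * Jmod ν t with hu
  set v : ℝ → ℂ := fun t =>
    (t : ℂ) ^ (ν + 1 / 2) * ((ν + 1 / 2) / t * Jmod ν t - t * Jmod (ν + 1) t)
  have hderiv_Q : ∀ t : ℝ, 1 ≤ t → HasDerivAt (fun t => -(κ * t⁻¹)) (κ / t ^ 2) t := fun t ht =>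
    ((hasDerivAt_inv (by linarith)).const_mul κ).neg.congr_deriv (by ring)
  have hbound : ∀ t : ℝ, 1 ≤ t →
      ‖(ν ^ 2 - 1 / 4) / t ^ 2 * u t‖ ≤ κ / t ^ 2 * ‖u t‖ := fun t ht => by
    rw [norm_mul, norm_div, norm_pow, Complex.norm_of_nonneg (by linarith)]
  refine ⟨√((‖u 1‖ ^ 2 + ‖v 1‖ ^ 2) * exp κ), fun t ht => ?_⟩
  have ht0 : 0 < t := by linarith
  have henergy := norm_sq_add_norm_sq_le_mul_exp (u := u) (v := v)
    (fun t ht => hasDerivAt_cpow_mul_Jmod hν (by linarith))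
    (fun t ht => hasDerivAt_cpow_mul_sub_Jmod hν (by linarith)) hderiv_Q
    (fun t _ => by positivity) hbound ht
  have hexp : exp (-(κ * t⁻¹) - -(κ * 1⁻¹)) ≤ exp κ := by
    have : 0 ≤ κ * t⁻¹ := by positivity
    gcongr
    linarith
  have hnorm : ‖u t‖ = t ^ (ν.re + 1 / 2) * ‖Jmod ν t‖ := by
    rw [hu, norm_mul, Complex.norm_cpow_eq_rpow_re_of_pos ht0]
    norm_num
  rw [← hnorm]
  refine le_sqrt_of_sq_le ?_
  calc ‖u t‖ ^ 2 ≤ ‖u t‖ ^ 2 + ‖v t‖ ^ 2 := le_add_of_nonneg_right (sq_nonneg _)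
    _ ≤ (‖u 1‖ ^ 2 + ‖v 1‖ ^ 2) * exp κ := henergy.trans (by gcongr)

lemma exists_norm_Jmod_le (hν : -1 / 2 < ν.re) :
    ∃ C, 0 ≤ C ∧ ∀ t, 0 ≤ t → ‖Jmod ν t‖ ≤ C * (1 + t) ^ (-(ν.re + 1 / 2)) := by
  obtain ⟨B, hB⟩ := exists_norm_Jmod_le_const ν
  obtain ⟨D, hD⟩ := exists_rpow_mul_norm_Jmod_le hν
  set p := ν.re + 1 / 2 with hp
  have hp0 : 0 ≤ p := by linarith
  have hB0 : 0 ≤ B := (norm_nonneg _).trans (hB 0)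
  refine ⟨2 ^ p * max B D, by positivity, fun t ht => ?_⟩
  rw [rpow_neg (by positivity), ← div_eq_mul_inv, le_div_iff₀ (by positivity), mul_comm]
  rcases le_total t 1 with ht1 | ht1
  · calc (1 + t) ^ p * ‖Jmod ν t‖ ≤ 2 ^ p * B := by
          gcongr
          · linarith
          · exact hB t
      _ ≤ 2 ^ p * max B D := by gcongr; exact le_max_left _ _
  · calc (1 + t) ^ p * ‖Jmod ν t‖ ≤ (2 * t) ^ p * ‖Jmod ν t‖ := by gcongr; linarith
      _ = 2 ^ p * (t ^ p * ‖Jmod ν t‖) := by rw [mul_rpow zero_le_two ht, mul_assoc]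
      _ ≤ 2 ^ p * max B D := by gcongr; exact (hD t ht1).trans (le_max_right _ _)

end Jmod

section BesselSpan

variable {V : Type*} [NormedAddCommGroup V] [InnerProductSpace ℝ V]

lemma hasFDerivAt_norm {x : V} (hx : x ≠ 0) :
    HasFDerivAt (fun y : V => ‖y‖) (‖x‖⁻¹ • innerSL ℝ x) x := by
  have hn : ‖x‖ ≠ 0 := norm_ne_zero_iff.2 hx
  have hsqrt := (hasStrictFDerivAt_norm_sq x).hasFDerivAt.sqrt (by positivity)
  simp only [Real.sqrt_sq (norm_nonneg _)] at hsqrt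
  refine hsqrt.congr_fderiv ?_
  ext y
  simp only [one_div, mul_inv_rev, smul_apply, coe_innerSL_apply, nsmul_eq_mul, Nat.cast_ofNat,
    smul_eq_mul]
  field_simp

/- A derivative of the form `t • c` vanishes at `0`, which makes the radial function differentiable
even at the origin, where the norm is not. -/
lemma hasFDerivAt_comp_norm {F : Type*} [NormedAddCommGroup F] [NormedSpace ℝ F] {φ : ℝ → F}
    {c : F} {x : V} (hφ : HasDerivAt φ (‖x‖ • c) ‖x‖) :
    HasFDerivAt (fun y => φ ‖y‖) ((innerSL ℝ x).smulRight c) x := by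
  rcases eq_or_ne x 0 with rfl | hx
  · rw [norm_zero, zero_smul] at hφ
    have hlittle : (fun t => φ t - φ 0) =o[nhds 0] fun t => t := by
      simpa using hφ.isLittleO
    have hcomp := (hlittle.comp_tendsto (tendsto_norm_zero (E := V))).of_norm_right
    refine .of_isLittleO ?_
    simpa [Function.comp_def] using hcomp
  · refine (hφ.hasFDerivAt.comp x (hasFDerivAt_norm hx)).congr_fderiv ?_
    ext y
    simp only [ContinuousLinearMap.comp_smulₛₗ, map_inv₀, ringHom_apply, smul_apply,
      ContinuousLinearMap.comp_apply, coe_innerSL_apply,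
      ContinuousLinearMap.toSpanSingleton_apply, smul_smul, ContinuousLinearMap.smulRight_apply]
    field_simp

variable (V) in
/-- The span of the functions `x ↦ ⟪v₁, x⟫ ⋯ ⟪vₘ, x⟫ 𝒥_{ν+j}(‖x‖)` with `m ≤ j`. It contains
`𝒥_ν(‖·‖)`, is stable under directional derivatives because `𝒥_ν'(t) = -t 𝒥_{ν+1}(t)`, and each of
its members decays like `𝒥_ν(‖·‖)`. -/
noncomputable def besselSpan (ν : ℂ) : Submodule ℂ (V → ℂ) :=
  Submodule.span ℂ {f | ∃ (u : Multiset V) (j : ℕ), u.card ≤ j ∧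
    f = fun x => (u.map fun v => (inner ℝ v x : ℂ)).prod * Jmod (ν + j) ‖x‖}

variable {ν : ℂ}

lemma prod_inner_mul_Jmod_mem_besselSpan (ν : ℂ) {u : Multiset V} {j : ℕ} (hu : u.card ≤ j) :
    (fun x => (u.map fun v => (inner ℝ v x : ℂ)).prod * Jmod (ν + j) ‖x‖) ∈ besselSpan V ν :=
  Submodule.subset_span ⟨u, j, hu, rfl⟩

lemma Jmod_norm_mem_besselSpan (ν : ℂ) : (fun x : V => Jmod ν ‖x‖) ∈ besselSpan V ν := by
  simpa using prod_inner_mul_Jmod_mem_besselSpan ν (Multiset.card_zero (α := V)).le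

lemma neg_half_lt_re_add_natCast (hν : -1 / 2 < ν.re) (j : ℕ) : -1 / 2 < (ν + j).re := by
  rw [Complex.add_re, Complex.natCast_re]
  linarith [j.cast_nonneg (α := ℝ)]

lemma hasFDerivAt_prod_inner [DecidableEq V] (u : Multiset V) (x : V) :
    HasFDerivAt (fun x => (u.map fun v => (inner ℝ v x : ℂ)).prod)
      (u.map fun v => ((u.erase v).map fun v => (inner ℝ v x : ℂ)).prod •
        (Complex.ofRealCLM.comp (innerSL ℝ v))).sum x :=
  HasFDerivAt.multiset_prod fun v _ => (Complex.ofRealCLM.comp (innerSL ℝ v)).hasFDerivAt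

lemma hasFDerivAt_Jmod_norm (hν : -1 / 2 < ν.re) (x : V) :
    HasFDerivAt (fun x : V => Jmod ν ‖x‖) ((innerSL ℝ x).smulRight (-Jmod (ν + 1) ‖x‖)) x :=
  hasFDerivAt_comp_norm (by simpa using hasDerivAt_Jmod hν ‖x‖)

lemma fderiv_prod_inner_mul_Jmod_apply [DecidableEq V] (hν : -1 / 2 < ν.re) (u : Multiset V)
    (x w : V) :
    fderiv ℝ (fun x => (u.map fun v => (inner ℝ v x : ℂ)).prod * Jmod ν ‖x‖) x w =
      (u.map fun v => (inner ℝ v w : ℂ) *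
        (((u.erase v).map fun v => (inner ℝ v x : ℂ)).prod * Jmod ν ‖x‖)).sum -
      ((w ::ₘ u).map fun v => (inner ℝ v x : ℂ)).prod * Jmod (ν + 1) ‖x‖ := by
  rw [((hasFDerivAt_prod_inner u x).fun_mul (hasFDerivAt_Jmod_norm hν x)).fderiv]
  have hsum : (u.map fun v => ((u.erase v).map fun v => (inner ℝ v x : ℂ)).prod •
      (Complex.ofRealCLM.comp (innerSL ℝ v))).sum w =
        (u.map fun v =>
          ((u.erase v).map fun v => (inner ℝ v x : ℂ)).prod * (inner ℝ v w : ℂ)).sum := by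
    rw [← ContinuousLinearMap.apply_apply (𝕜 := ℝ) w, map_multiset_sum, Multiset.map_map]
    rfl
  simp only [add_apply, smul_apply, hsum,
    ContinuousLinearMap.smulRight_apply, innerSL_apply_apply, Multiset.map_cons,
    Multiset.prod_cons, smul_eq_mul, ← Multiset.sum_map_mul_left, Complex.real_smul,
    real_inner_comm x w]
  rw [add_comm, sub_eq_add_neg]
  congr 1
  · congr 2 with v
    ring
  · ring

lemma differentiable_of_mem_besselSpan (hν : -1 / 2 < ν.re) {f : V → ℂ}
    (hf : f ∈ besselSpan V ν) : Differentiable ℝ f := by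
  classical
  induction hf using Submodule.span_induction with
  | mem f hf =>
    obtain ⟨u, j, -, rfl⟩ := hf
    exact fun x => ((hasFDerivAt_prod_inner u x).fun_mul
      (hasFDerivAt_Jmod_norm (neg_half_lt_re_add_natCast hν j) x)).differentiableAt
  | zero => exact differentiable_const 0
  | add f g _ _ hf hg => exact hf.add hg
  | smul c f _ hf => exact hf.const_smul c

lemma fderiv_apply_mem_besselSpan (hν : -1 / 2 < ν.re) {f : V → ℂ} (hf : f ∈ besselSpan V ν)
    (w : V) : (fun x => fderiv ℝ f x w) ∈ besselSpan V ν := by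
  classical
  induction hf using Submodule.span_induction with
  | mem f hf =>
    obtain ⟨u, j, hu, rfl⟩ := hf
    simp only [fderiv_prod_inner_mul_Jmod_apply (neg_half_lt_re_add_natCast hν j)]
    have hsum : (fun x => (u.map fun v => (inner ℝ v w : ℂ) *
        (((u.erase v).map fun v => (inner ℝ v x : ℂ)).prod * Jmod (ν + j) ‖x‖)).sum) ∈
        besselSpan V ν := by
      convert multiset_sum_mem (S := besselSpan V ν) (u.map fun v x => (inner ℝ v w : ℂ) *
        (((u.erase v).map fun v => (inner ℝ v x : ℂ)).prod * Jmod (ν + j) ‖x‖)) ?_ using 1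
      · ext x
        rw [Pi.multiset_sum_apply, Multiset.map_map]
        rfl
      · simp only [Multiset.mem_map, forall_exists_index, and_imp, forall_apply_eq_imp_iff₂]
        exact fun v _ => Submodule.smul_mem _ _
          (prod_inner_mul_Jmod_mem_besselSpan ν (u.card_erase_le.trans hu))
    have hcons : (fun x => ((w ::ₘ u).map fun v => (inner ℝ v x : ℂ)).prod *
        Jmod (ν + j + 1) ‖x‖) ∈ besselSpan V ν := by
      rw [add_assoc, ← Nat.cast_add_one]
      exact prod_inner_mul_Jmod_mem_besselSpan ν (by simpa using hu)
    exact sub_mem hsum hcons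
  | zero => simp only [Pi.zero_def, fderiv_fun_const]; exact zero_mem _
  | add f g hf hg ihf ihg =>
    convert add_mem ihf ihg using 2 with x
    rw [fderiv_add (differentiable_of_mem_besselSpan hν hf x)
      (differentiable_of_mem_besselSpan hν hg x)]
    rfl
  | smul c f hf ih =>
    convert Submodule.smul_mem _ c ih using 2 with x
    rw [fderiv_const_smul (differentiable_of_mem_besselSpan hν hf x)]
    rfl

lemma norm_prod_inner_le (u : Multiset V) (x : V) :
    ‖(u.map fun v => (inner ℝ v x : ℂ)).prod‖ ≤ (u.map fun v => ‖v‖).prod * ‖x‖ ^ u.card := by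
  induction u using Multiset.induction_on with
  | empty => simp
  | cons v u ih =>
    simp only [Multiset.map_cons, Multiset.prod_cons, Multiset.card_cons, norm_mul]
    calc ‖(inner ℝ v x : ℂ)‖ * ‖(u.map fun v => (inner ℝ v x : ℂ)).prod‖
        ≤ (‖v‖ * ‖x‖) * ((u.map fun v => ‖v‖).prod * ‖x‖ ^ u.card) := by
          gcongr
          rw [Complex.norm_real]
          exact norm_inner_le_norm v x
      _ = ‖v‖ * (u.map fun v => ‖v‖).prod * ‖x‖ ^ (u.card + 1) := by ring

lemma exists_norm_prod_inner_mul_Jmod_le (hν : -1 / 2 < ν.re) {u : Multiset V} {j : ℕ}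
    (hu : u.card ≤ j) :
    ∃ C, 0 ≤ C ∧ ∀ x, ‖(u.map fun v => (inner ℝ v x : ℂ)).prod * Jmod (ν + j) ‖x‖‖ ≤
      C * (1 + ‖x‖) ^ (-(ν.re + 1 / 2)) := by
  obtain ⟨C, hC0, hC⟩ := exists_norm_Jmod_le (neg_half_lt_re_add_natCast hν j)
  have hu0 : 0 ≤ (u.map fun v => ‖v‖).prod :=
    Multiset.prod_nonneg fun a ha => by
      obtain ⟨v, -, rfl⟩ := Multiset.mem_map.1 ha
      exact norm_nonneg v
  refine ⟨(u.map fun v => ‖v‖).prod * C, by positivity, fun x => ?_⟩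
  have h1 : 0 < 1 + ‖x‖ := by positivity
  have hpow : ‖x‖ ^ u.card ≤ (1 + ‖x‖) ^ j :=
    (pow_le_pow_left₀ (norm_nonneg x) (by linarith) _).trans
      (pow_le_pow_right₀ (by linarith [norm_nonneg x]) hu)
  calc ‖(u.map fun v => (inner ℝ v x : ℂ)).prod * Jmod (ν + j) ‖x‖‖
      ≤ ((u.map fun v => ‖v‖).prod * (1 + ‖x‖) ^ j) *
          (C * (1 + ‖x‖) ^ (-((ν + j).re + 1 / 2))) := by
        rw [norm_mul]
        gcongr
        · exact (norm_prod_inner_le u x).trans (by gcongr)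
        · exact hC _ (norm_nonneg x)
    _ = (u.map fun v => ‖v‖).prod * C *
          ((1 + ‖x‖) ^ (j : ℝ) * (1 + ‖x‖) ^ (-((ν + j).re + 1 / 2))) := by
        rw [rpow_natCast]; ring
    _ = (u.map fun v => ‖v‖).prod * C * (1 + ‖x‖) ^ (-(ν.re + 1 / 2)) := by
        rw [← rpow_add h1, Complex.add_re, Complex.natCast_re]
        ring_nf

lemma exists_norm_le_of_mem_besselSpan (hν : -1 / 2 < ν.re) {f : V → ℂ}
    (hf : f ∈ besselSpan V ν) :
    ∃ C, 0 ≤ C ∧ ∀ x, ‖f x‖ ≤ C * (1 + ‖x‖) ^ (-(ν.re + 1 / 2)) := by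
  induction hf using Submodule.span_induction with
  | mem f hf =>
    obtain ⟨u, j, hu, rfl⟩ := hf
    exact exists_norm_prod_inner_mul_Jmod_le hν hu
  | zero => exact ⟨0, le_rfl, fun x => by simp⟩
  | add f g _ _ hf hg =>
    obtain ⟨C, hC0, hC⟩ := hf
    obtain ⟨D, hD0, hD⟩ := hg
    exact ⟨C + D, add_nonneg hC0 hD0, fun x => by
      rw [add_mul]; exact norm_add_le_of_le (hC x) (hD x)⟩
  | smul c f _ hf =>
    obtain ⟨C, hC0, hC⟩ := hf
    refine ⟨‖c‖ * C, by positivity, fun x => ?_⟩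
    rw [Pi.smul_apply, norm_smul, mul_assoc]
    gcongr
    exact hC x

end BesselSpan

section PartialDerivatives

variable {l : ℕ} {ν : ℂ}

lemma mderiv_mem_besselSpan (hν : -1 / 2 < ν.re) {f : EuclideanSpace ℝ (Fin l) → ℂ}
    (hf : f ∈ besselSpan (EuclideanSpace ℝ (Fin l)) ν) (L : List (Fin l)) :
    mderiv L f ∈ besselSpan (EuclideanSpace ℝ (Fin l)) ν := by
  induction L with
  | nil => exact hf
  | cons i L ih => exact fderiv_apply_mem_besselSpan hν ih (EuclideanSpace.single i 1)

lemma mderiv_comp_smul (f : EuclideanSpace ℝ (Fin l) → ℂ) (r : ℝ) (L : List (Fin l)) :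
    mderiv L (fun x => f (r • x)) = r ^ L.length • fun x => mderiv L f (r • x) := by
  induction L with
  | nil => simp only [mderiv, List.length_nil, pow_zero, one_smul]
  | cons i L ih =>
    ext x
    simp only [mderiv, ih, fderiv_const_smul_field, Pi.smul_apply, fderiv_comp_smul,
      smul_apply, List.length_cons, pow_succ, mul_smul]

lemma exists_partialD_Jmod_norm_eq (hν : -1 / 2 < ν.re) (α : Fin l → ℕ) :
    ∃ g ∈ besselSpan (EuclideanSpace ℝ (Fin l)) ν, ∀ r : ℝ, 0 ≤ r →
      partialD α (fun x => Jmod ν (r * ‖x‖)) = r ^ (∑ i, α i) • fun x => g (r • x) := by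
  refine ⟨partialD α fun x => Jmod ν ‖x‖,
    mderiv_mem_besselSpan hν (Jmod_norm_mem_besselSpan ν) _, fun r hr => ?_⟩
  have hlength : ((List.finRange l).flatMap fun i => List.replicate (α i) i).length = ∑ i, α i := by
    simp [List.length_flatMap, Fin.sum_univ_def]
  rw [← hlength, partialD, partialD, ← mderiv_comp_smul]
  simp only [norm_smul, norm_of_nonneg hr]

lemma continuous_partialD_Jmod_norm (hν : -1 / 2 < ν.re) (α : Fin l → ℕ) {r : ℝ} (hr : 0 ≤ r) :
    Continuous (partialD α fun x => Jmod ν (r * ‖x‖)) := by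
  obtain ⟨g, hg, hpartial⟩ := exists_partialD_Jmod_norm_eq hν α
  rw [hpartial r hr]
  exact ((differentiable_of_mem_besselSpan hν hg).continuous.comp
    (continuous_const_smul r)).const_smul _

lemma exists_norm_partialD_Jmod_norm_le (hν : -1 / 2 < ν.re) (α : Fin l → ℕ) :
    ∃ C, 0 ≤ C ∧ ∀ r : ℝ, 0 ≤ r → ∀ x,
      ‖partialD α (fun x => Jmod ν (r * ‖x‖)) x‖ ≤
        C * r ^ (∑ i, α i) * (1 + r * ‖x‖) ^ (-(ν.re + 1 / 2)) := by
  obtain ⟨g, hg, hpartial⟩ := exists_partialD_Jmod_norm_eq hν α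
  obtain ⟨C, hC0, hC⟩ := exists_norm_le_of_mem_besselSpan hν hg
  refine ⟨C, hC0, fun r hr x => ?_⟩
  have hgx := hC (r • x)
  rw [norm_smul, norm_of_nonneg hr] at hgx
  rw [hpartial r hr, Pi.smul_apply, norm_smul, norm_pow, norm_of_nonneg hr, mul_comm C, mul_assoc]
  gcongr

/-- `∑_{|α| ≤ n} |∂^α f(x)|`, with the multi-indices enumerated as in
`Jmod_multiindex_L2_tail`. -/
noncomputable def jetSum (n : ℕ) (f : EuclideanSpace ℝ (Fin l) → ℂ)
    (x : EuclideanSpace ℝ (Fin l)) : ℝ :=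
  ∑ α ∈ Finset.univ.filter (fun α : Fin l → Fin (n + 1) => (∑ i, (α i : ℕ)) ≤ n),
    ‖partialD (fun i => (α i : ℕ)) f x‖

lemma jetSum_nonneg (n : ℕ) (f : EuclideanSpace ℝ (Fin l) → ℂ) (x : EuclideanSpace ℝ (Fin l)) :
    0 ≤ jetSum n f x :=
  Finset.sum_nonneg fun _ _ => norm_nonneg _

lemma continuous_jetSum_Jmod_norm (hν : -1 / 2 < ν.re) (n : ℕ) {r : ℝ} (hr : 0 ≤ r) :
    Continuous (jetSum n fun x : EuclideanSpace ℝ (Fin l) => Jmod ν (r * ‖x‖)) :=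
  continuous_finsetSum _ fun _ _ => (continuous_partialD_Jmod_norm hν _ hr).norm

variable (l) in
lemma exists_jetSum_Jmod_norm_le (hν : -1 / 2 < ν.re) (n : ℕ) :
    ∃ C, 0 ≤ C ∧ ∀ r : ℝ, 0 ≤ r → ∀ x : EuclideanSpace ℝ (Fin l),
      jetSum n (fun x => Jmod ν (r * ‖x‖)) x ≤
        C * (∑ m ∈ Finset.range (n + 1), r ^ m) * (1 + r * ‖x‖) ^ (-(ν.re + 1 / 2)) := by
  choose C hC0 hC using fun α : Fin l → Fin (n + 1) =>
    exists_norm_partialD_Jmod_norm_le hν fun i => (α i : ℕ)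
  refine ⟨∑ α ∈ Finset.univ.filter
    (fun α : Fin l → Fin (n + 1) => (∑ i, (α i : ℕ)) ≤ n), C α,
    Finset.sum_nonneg fun α _ => hC0 α, fun r hr x => ?_⟩
  rw [Finset.sum_mul, Finset.sum_mul]
  refine Finset.sum_le_sum fun α hα => (hC α r hr x).trans ?_
  have hpow : r ^ (∑ i, (α i : ℕ)) ≤ ∑ m ∈ Finset.range (n + 1), r ^ m :=
    Finset.single_le_sum (f := fun m => r ^ m) (fun m _ => pow_nonneg hr m)
      (Finset.mem_range.2 (Nat.lt_succ_of_le (Finset.mem_filter.1 hα).2))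
  have := hC0 α
  gcongr

variable (l) in
lemma exists_jetSum_Jmod_sqrt_mul_norm_le (hν : -1 / 2 < ν.re) (n : ℕ) :
    ∃ C, 0 ≤ C ∧ ∀ T : ℝ, 0 < T → ∀ x : EuclideanSpace ℝ (Fin l), x ≠ 0 →
      jetSum n (fun x => Jmod ν (√T * ‖x‖)) x ≤
        C * (∑ m ∈ Finset.range (n + 1), T ^ ((m : ℝ) / 2)) * T ^ (-(ν.re + 1 / 2) / 2) *
          ‖x‖ ^ (-(ν.re + 1 / 2)) := by
  obtain ⟨C, hC0, hC⟩ := exists_jetSum_Jmod_norm_le l hν n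
  refine ⟨C, hC0, fun T hT x hx => (hC √T (sqrt_nonneg T) x).trans ?_⟩
  have hx0 : 0 < ‖x‖ := norm_pos_iff.2 hx
  simp only [rpow_div_two_eq_sqrt _ hT.le, rpow_natCast]
  rw [mul_assoc _ (_ ^ _), ← mul_rpow (sqrt_nonneg T) hx0.le]
  refine mul_le_mul_of_nonneg_left ?_ (by positivity)
  exact rpow_le_rpow_of_nonpos (by positivity) (by linarith) (by linarith)

end PartialDerivatives

section Tail

open Module (finrank)
open scoped Pointwise

lemma measurableSet_lt_norm {V : Type*} [NormedAddCommGroup V] [MeasurableSpace V]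
    [OpensMeasurableSpace V] (a : ℝ) : MeasurableSet {x : V | a < ‖x‖} :=
  measurableSet_lt measurable_const measurable_norm

variable {V : Type*} [NormedAddCommGroup V] [NormedSpace ℝ V] [FiniteDimensional ℝ V]
  [MeasurableSpace V] [BorelSpace V] (μ : Measure V) [μ.IsAddHaarMeasure]

lemma integrableOn_norm_rpow_neg {q a : ℝ} (hq : finrank ℝ V < q) (ha : 0 < a) :
    IntegrableOn (fun x : V => ‖x‖ ^ (-q)) {x | a < ‖x‖} μ := by
  have hq0 : 0 ≤ q := (Nat.cast_nonneg _).trans hq.le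
  refine ((integrable_one_add_norm hq).const_mul ((a⁻¹ + 1) ^ q)).integrableOn.mono'
    (measurable_norm.pow_const _).aestronglyMeasurable ?_
  refine (ae_restrict_iff' (measurableSet_lt_norm a)).2 (.of_forall fun x (hx : a < ‖x‖) => ?_)
  have hx0 : 0 < ‖x‖ := ha.trans hx
  have hle : (1 + ‖x‖) / (a⁻¹ + 1) ≤ ‖x‖ := by
    rw [div_le_iff₀ (by positivity), mul_add, mul_one]
    gcongr
    exact (le_mul_inv_iff₀ ha).2 (by simpa using hx.le)
  calc ‖‖x‖ ^ (-q)‖ = ‖x‖ ^ (-q) := norm_of_nonneg (by positivity)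
    _ ≤ ((1 + ‖x‖) / (a⁻¹ + 1)) ^ (-q) :=
      rpow_le_rpow_of_nonpos (by positivity) hle (neg_nonpos.2 hq0)
    _ = (a⁻¹ + 1) ^ q * (1 + ‖x‖) ^ (-q) := by
      rw [div_rpow (by positivity) (by positivity), rpow_neg (x := a⁻¹ + 1) (by positivity),
        div_inv_eq_mul, mul_comm]

lemma setIntegral_norm_rpow_neg (q : ℝ) {a : ℝ} (ha : 0 < a) :
    ∫ x in {x : V | a < ‖x‖}, ‖x‖ ^ (-q) ∂μ =
      a ^ (finrank ℝ V - q) * ∫ x in {x : V | 1 < ‖x‖}, ‖x‖ ^ (-q) ∂μ := by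
  have hset : a • {x : V | 1 < ‖x‖} = {x | a < ‖x‖} := by
    ext x
    rw [Set.mem_smul_set_iff_inv_smul_mem₀ ha.ne', Set.mem_ofPred_eq, Set.mem_ofPred_eq, norm_smul,
      norm_of_nonneg (by positivity), lt_inv_mul_iff₀ ha, mul_one]
  have hscale := Measure.setIntegral_comp_smul_of_pos μ (fun x : V => ‖x‖ ^ (-q))
    {x | 1 < ‖x‖} ha
  simp only [norm_smul, norm_of_nonneg ha.le, mul_rpow ha.le (norm_nonneg _),
    integral_const_mul, hset, smul_eq_mul] at hscale
  rw [sub_eq_add_neg, rpow_add ha, rpow_natCast, mul_assoc, hscale,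
    mul_inv_cancel_left₀ (by positivity)]

lemma integrableOn_sq_and_sqrt_setIntegral_sq_le {p a A : ℝ} {F : V → ℝ}
    (hp : finrank ℝ V < 2 * p) (ha : 0 < a) (hA : 0 ≤ A)
    (hF : AEStronglyMeasurable F (μ.restrict {x | a < ‖x‖}))
    (hle : ∀ x, a < ‖x‖ → |F x| ≤ A * ‖x‖ ^ (-p)) :
    IntegrableOn (fun x => F x ^ 2) {x | a < ‖x‖} μ ∧
      √(∫ x in {x | a < ‖x‖}, F x ^ 2 ∂μ) ≤
        A * √(∫ x in {x : V | 1 < ‖x‖}, ‖x‖ ^ (-(2 * p)) ∂μ) * a ^ (finrank ℝ V / 2 - p) := by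
  have hdom : IntegrableOn (fun x : V => A ^ 2 * ‖x‖ ^ (-(2 * p))) {x | a < ‖x‖} μ :=
    (integrableOn_norm_rpow_neg μ hp ha).const_mul _
  have hsq : ∀ x, a < ‖x‖ → F x ^ 2 ≤ A ^ 2 * ‖x‖ ^ (-(2 * p)) := fun x hx =>
    calc F x ^ 2 = |F x| ^ 2 := (sq_abs _).symm
      _ ≤ (A * ‖x‖ ^ (-p)) ^ 2 := by gcongr; exact hle x hx
      _ = A ^ 2 * ‖x‖ ^ (-(2 * p)) := by
        rw [mul_pow, ← rpow_mul_natCast (norm_nonneg x)]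
        congr 2
        push_cast
        ring
  have hint : IntegrableOn (fun x => F x ^ 2) {x | a < ‖x‖} μ :=
    hdom.mono' (hF.pow 2) <| (ae_restrict_iff' (measurableSet_lt_norm a)).2 <|
      .of_forall fun x hx => by simpa only [norm_of_nonneg (sq_nonneg _)] using hsq x hx
  refine ⟨hint, sqrt_le_iff.2 ⟨by positivity, ?_⟩⟩
  calc ∫ x in {x | a < ‖x‖}, F x ^ 2 ∂μ
      ≤ ∫ x in {x | a < ‖x‖}, A ^ 2 * ‖x‖ ^ (-(2 * p)) ∂μ :=
        setIntegral_mono_on hint hdom (measurableSet_lt_norm a) hsq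
    _ = (A * √(∫ x in {x : V | 1 < ‖x‖}, ‖x‖ ^ (-(2 * p)) ∂μ) *
          a ^ (finrank ℝ V / 2 - p)) ^ 2 := by
        rw [integral_const_mul, setIntegral_norm_rpow_neg μ _ ha, mul_pow, mul_pow, sq_sqrt
          (integral_nonneg fun x => by positivity), ← rpow_mul_natCast ha.le]
        push_cast
        ring_nf

end Tail

theorem Jmod_multiindex_L2_tail_general (l n : ℕ) {z : ℂ} (hz : -1 / 2 < z.re) :
    ∃ c : ℝ, 0 < c ∧ ∀ T : ℝ, 0 < T → ∀ a : ℝ, 0 < a →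
      IntegrableOn (fun H => jetSum n (fun H' => Jmod (z + l / 2) (√T * ‖H'‖)) H ^ 2)
        {H : EuclideanSpace ℝ (Fin l) | a < ‖H‖} ∧
      √(∫ H in {H : EuclideanSpace ℝ (Fin l) | a < ‖H‖},
          jetSum n (fun H' => Jmod (z + l / 2) (√T * ‖H'‖)) H ^ 2) ≤
        c * (∑ m ∈ Finset.range (n + 1), T ^ ((m : ℝ) / 2)) *
          T ^ (-(z.re / 2 + ((l : ℝ) + 1) / 4)) * a ^ (-z.re - 1 / 2) := by
  set ν : ℂ := z + l / 2 with hνdef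
  have hre : ν.re = z.re + l / 2 := by simp [hνdef]
  have hν : -1 / 2 < ν.re := by linarith [l.cast_nonneg (α := ℝ)]
  have hexpT : -(ν.re + 1 / 2) / 2 = -(z.re / 2 + ((l : ℝ) + 1) / 4) := by rw [hre]; ring
  have hexpa : (l : ℝ) / 2 - (ν.re + 1 / 2) = -z.re - 1 / 2 := by rw [hre]; ring
  obtain ⟨C, hC0, hC⟩ := exists_jetSum_Jmod_sqrt_mul_norm_le l hν n
  rw [hexpT] at hC
  set D := √(∫ H in {H : EuclideanSpace ℝ (Fin l) | 1 < ‖H‖}, ‖H‖ ^ (-(2 * (ν.re + 1 / 2))))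
  refine ⟨C * D + 1, by positivity, fun T hT a ha => ?_⟩
  obtain ⟨hint, hle⟩ := integrableOn_sq_and_sqrt_setIntegral_sq_le volume
    (V := EuclideanSpace ℝ (Fin l)) (p := ν.re + 1 / 2)
    (A := C * (∑ m ∈ Finset.range (n + 1), T ^ ((m : ℝ) / 2)) *
      T ^ (-(z.re / 2 + ((l : ℝ) + 1) / 4)))
    (by rw [finrank_euclideanSpace_fin]; linarith) ha (by positivity)
    (continuous_jetSum_Jmod_norm hν n (sqrt_nonneg T)).aestronglyMeasurable fun H hH =>
      (abs_of_nonneg (jetSum_nonneg n _ H)).trans_le (hC T hT H (norm_pos_iff.1 (ha.trans hH)))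
  refine ⟨hint, hle.trans ?_⟩
  rw [finrank_euclideanSpace_fin, hexpa, mul_right_comm _ _ D, mul_right_comm C _ D]
  gcongr
  exact le_add_of_nonneg_right zero_le_one

/-- L² tail estimate for sums of multi-index derivatives of
H ↦ 𝒥_{z+l/2}(√(R−ρ₀²)‖H‖), over multi-indices of order at most 2k (each such
multi-index has all entries ≤ 2k, so they are enumerated by functions Fin l → Fin (2k+1)). -/
theorem Jmod_multiindex_L2_tail (l k : ℕ) (hl : 1 ≤ l) (ρ₀ : ℝ) (hρ : 0 ≤ ρ₀)
    (z : ℂ) (hz : 0 ≤ z.re) :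
    ∃ c : ℝ, 0 < c ∧ ∀ R : ℝ, ρ₀ ^ 2 < R → ∀ a : ℝ, 0 < a →
      Real.sqrt (∫ H in {H : EuclideanSpace ℝ (Fin l) | a < ‖H‖},
          (∑ α ∈ Finset.univ.filter
              (fun α : Fin l → Fin (2 * k + 1) => (∑ i, (α i : ℕ)) ≤ 2 * k),
            ‖partialD (fun i => (α i : ℕ))
                (fun H' => Jmod (z + l / 2) (Real.sqrt (R - ρ₀ ^ 2) * ‖H'‖)) H‖) ^ 2) ≤
        c * (∑ m ∈ Finset.range (2 * k + 1), (R - ρ₀ ^ 2) ^ ((m : ℝ) / 2)) *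
          (R - ρ₀ ^ 2) ^ (-(z.re / 2 + ((l : ℝ) + 1) / 4)) *
          a ^ (-z.re - 1 / 2) := by
  obtain ⟨c, hc, h⟩ := Jmod_multiindex_L2_tail_general l (2 * k) (z := z) (by linarith)
  exact ⟨c, hc, fun R hR a ha => (h _ (sub_pos.2 hR) a ha).2⟩
end

section
/- Let l ≥ 1 and k ≥ 0 be integers, ρ₀ ≥ 0, and z ∈ ℂ with Re z ≥ 0. There exists a constant c > 0 such that for all R ≥ ρ₀² + 1 and all a ≥ 1/2, ( ∫_{‖H‖ > a} ( Σ_{|α| ≤ 2k} |∂^α (ℱ^{−1} s_R^z)(H)| )² dH )^{1/2} ≤ c R^{−(Re z − (2k + l/2) + 1/2)/2} a^{−Re z − 1/2}. -/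
open Real MeasureTheory

/-- s_R^z(λ) = (1 − (ρ₀² + ‖λ‖²)/R)_+^z on ℝ^l. -/
noncomputable def sRz (l : ℕ) (ρ₀ R : ℝ) (z : ℂ) (lam : EuclideanSpace ℝ (Fin l)) : ℂ :=
  if 0 < 1 - (ρ₀ ^ 2 + ‖lam‖ ^ 2) / R then
    ((1 - (ρ₀ ^ 2 + ‖lam‖ ^ 2) / R : ℝ) : ℂ) ^ z
  else 0

/-- The inverse Fourier transform (ℱ^{−1}g)(H) = (2π)^{−l} ∫_{ℝ^l} g(λ) e^{i⟨λ,H⟩} dλ. -/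
noncomputable def invFT (l : ℕ) (g : EuclideanSpace ℝ (Fin l) → ℂ)
    (H : EuclideanSpace ℝ (Fin l)) : ℂ :=
  (((2 * Real.pi) ^ l : ℝ) : ℂ)⁻¹ *
    ∫ lam : EuclideanSpace ℝ (Fin l),
      g lam * Complex.exp (Complex.I * ((inner ℝ lam H : ℝ) : ℂ))

/-!
After rescaling `λ = √(R - ρ₀²) x`, the function `s_R^z` becomes a bounded multiple of the
Bochner–Riesz function `(1 - ‖x‖²)_+^z`, and derivatives in `H` become multiplication by
polynomials, so everything reduces to the decay of `𝓕 f` in `L²({‖w‖ > a})` for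
`f = (1 - ‖x‖²)_+^z q` with `q` smooth. By Plancherel the `N`-th difference `Δ_{te}^N f` has
Fourier transform `(exp(-2πit⟨e, w⟩) - 1)^N 𝓕 f`. Where `⟨e, w⟩` is of size `1 / t` the multiplier
is bounded below, so `‖Δ_{te_j}^N f‖₂² = O(t^(2 Re z + 1))` for all `j` bounds `𝓕 f` on a dyadic
shell, and the shells are summed as a geometric series. Since `f` is smooth away from the unit
sphere, where it behaves like `dist^(Re z)`, `Δ_{te}^N f` is `O(t^N dist^(Re z - N))` at distance
at least `2Nt` from the sphere and `O(t^(Re z))` nearer to it; with `N > Re z + 1/2` both regions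
contribute `O(t^(2 Re z + 1))` to the square of the `L²` norm.
-/

open scoped ENNReal NNReal FourierTransform SchwartzMap fwdDiff ContDiff

section Plancherel

variable {V E : Type*} [NormedAddCommGroup V] [InnerProductSpace ℝ V] [FiniteDimensional ℝ V]
  [MeasurableSpace V] [BorelSpace V]
  [NormedAddCommGroup E] [InnerProductSpace ℂ E] [CompleteSpace E] {f : V → E}

lemma integral_schwartz_smul_fourier_toLp (ψ : 𝓢(V, ℂ)) (hf : Integrable f) (hf₂ : MemLp f 2) :
    ∫ x, ψ x • (𝓕 (hf₂.toLp f) : Lp E 2 (volume : Measure V)) x = ∫ x, ψ x • 𝓕 f x := calc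
  _ = ∫ x, 𝓕 ψ x • hf₂.toLp f x := by
    simpa [Lp.toTemperedDistribution_apply, TemperedDistribution.fourier_apply] using
      (DFunLike.congr_fun (Lp.fourier_toTemperedDistribution_eq (hf₂.toLp f)) ψ).symm
  _ = ∫ x, 𝓕 ψ x • f x := by
    refine integral_congr_ae ?_
    filter_upwards [hf₂.coeFn_toLp] with x hx using by rw [hx]
  _ = ∫ x, ψ x • 𝓕 f x := by
    simpa [flip_innerₗ, SchwartzMap.fourier_coe] using!
      VectorFourier.integral_fourierIntegral_smul_eq_flip (L := innerₗ V) (e := 𝐞)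
        Real.continuous_fourierChar continuous_inner ψ.integrable hf

lemma fourier_toLp_ae_eq (hf : Integrable f) (hf₂ : MemLp f 2) :
    (𝓕 (hf₂.toLp f) : Lp E 2 (volume : Measure V)) =ᵐ[volume] 𝓕 f := by
  have hcont : Continuous (𝓕 f) :=
    VectorFourier.fourierIntegral_continuous Real.continuous_fourierChar continuous_inner hf
  refine ae_eq_of_integral_contDiff_smul_eq ((Lp.memLp _).locallyIntegrable (by norm_num))
    hcont.locallyIntegrable fun φ hφ hφc ↦ ?_
  have hc : HasCompactSupport (Complex.ofRealCLM ∘ φ) := hφc.comp_left rfl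
  simpa using! integral_schwartz_smul_fourier_toLp (hc.toSchwartzMap (by fun_prop)) hf hf₂

theorem eLpNorm_fourier_eq (hf : Integrable f) (hf₂ : MemLp f 2) :
    eLpNorm (𝓕 f) 2 = eLpNorm f 2 volume := by
  rw [← eLpNorm_congr_ae (fourier_toLp_ae_eq hf hf₂), ← eLpNorm_congr_ae hf₂.coeFn_toLp,
    ← Lp.enorm_def, ← Lp.enorm_def, ← ofReal_norm, Lp.norm_fourier_eq, ofReal_norm]

lemma lintegral_enorm_sq_fourier_eq (hf : Integrable f) (hf₂ : MemLp f 2) :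
    ∫⁻ w, ‖𝓕 f w‖ₑ ^ 2 = ∫⁻ x, ‖f x‖ₑ ^ 2 := by
  have hsq (g : V → E) : ∫⁻ x, ‖g x‖ₑ ^ 2 = eLpNorm g 2 volume ^ 2 := by
    simpa using (eLpNorm_nnreal_pow_eq_lintegral (f := g) (μ := volume) (p := 2) two_ne_zero).symm
  rw [hsq, hsq, eLpNorm_fourier_eq hf hf₂]

end Plancherel

section FwdDiffMemLp

variable {M E : Type*} [AddCommMonoid M] [MeasurableSpace M] [MeasurableAdd M]
  [NormedAddCommGroup E] {μ : Measure M} [μ.IsAddRightInvariant] {f : M → E}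

lemma memLp_fwdDiff_iter {p : ℝ≥0∞} (hf : MemLp f p μ) (h : M) (n : ℕ) :
    MemLp ((Δ_[h])^[n] f) p μ := by
  induction n with
  | zero => exact hf
  | succ n ih =>
    rw [Function.iterate_succ_apply']
    exact (ih.comp_measurePreserving (measurePreserving_add_right μ h)).sub ih

lemma integrable_fwdDiff_iter (hf : Integrable f μ) (h : M) (n : ℕ) :
    Integrable ((Δ_[h])^[n] f) μ :=
  memLp_one_iff_integrable.1 (memLp_fwdDiff_iter (memLp_one_iff_integrable.2 hf) h n)

end FwdDiffMemLp

lemma fourier_fwdDiff_iter {V E : Type*} [NormedAddCommGroup V] [InnerProductSpace ℝ V]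
    [FiniteDimensional ℝ V] [MeasurableSpace V] [BorelSpace V] [NormedAddCommGroup E]
    [NormedSpace ℂ E] {f : V → E} (hf : Integrable f) (h w : V) (n : ℕ) :
    𝓕 ((Δ_[h])^[n] f) w = ((𝐞 (inner ℝ h w) : ℂ) - 1) ^ n • 𝓕 f w := by
  induction n with
  | zero => simp
  | succ n ih =>
    have hn := integrable_fwdDiff_iter hf h n
    have hshift : 𝓕 ((Δ_[h])^[n] f ∘ (· + h)) w = (𝐞 (inner ℝ h w) : ℂ) • 𝓕 ((Δ_[h])^[n] f) w :=
      congrFun (VectorFourier.fourierIntegral_comp_add_right 𝐞 volume (innerₗ V) _ h) w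
    have hsub : 𝓕 (Δ_[h] ((Δ_[h])^[n] f)) w
        = 𝓕 ((Δ_[h])^[n] f ∘ (· + h)) w - 𝓕 ((Δ_[h])^[n] f) w := by
      simp only [Real.fourier_eq, fwdDiff, smul_sub, Function.comp_apply]
      exact integral_sub ((Real.fourierIntegral_convergent_iff w).2 (hn.comp_add_right h))
        ((Real.fourierIntegral_convergent_iff w).2 hn)
    rw [Function.iterate_succ_apply', hsub, hshift, ih, pow_succ', mul_smul, sub_smul, one_smul]

lemma four_mul_abs_le_norm_fourierChar_sub_one {s : ℝ} (hs : |s| ≤ 1 / 2) :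
    4 * |s| ≤ ‖(𝐞 s : ℂ) - 1‖ := by
  have hjordan : 2 / π * |π * s| ≤ |sin (π * s)| := by
    refine Real.mul_abs_le_abs_sin ?_
    rw [abs_mul, abs_of_pos pi_pos]
    nlinarith [pi_pos]
  rw [Real.fourierChar_apply, mul_comm (_ : ℂ), Complex.norm_exp_I_mul_ofReal_sub_one, norm_mul,
    show 2 * π * s / 2 = π * s by ring, Real.norm_ofNat, Real.norm_eq_abs]
  rw [abs_mul, abs_of_pos pi_pos, ← mul_assoc, div_mul_cancel₀ _ pi_pos.ne'] at hjordan
  linarith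

lemma exists_norm_sq_le_card_mul_inner_sq {ι V : Type*} [Fintype ι] [NormedAddCommGroup V]
    [InnerProductSpace ℝ V] (b : OrthonormalBasis ι ℝ V) {w : V} (hw : w ≠ 0) :
    ∃ j, ‖w‖ ^ 2 ≤ Fintype.card ι * inner ℝ (b j) w ^ 2 := by
  have hparseval : ∑ j, inner ℝ (b j) w ^ 2 = ‖w‖ ^ 2 := by
    simpa using b.sum_sq_norm_inner_right w
  have : Nonempty ι := by
    by_contra! hι
    simp_all [eq_comm]
  by_contra! h
  have hlt : ∑ j, Fintype.card ι * inner ℝ (b j) w ^ 2 < ∑ _j : ι, ‖w‖ ^ 2 :=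
    Finset.sum_lt_sum_of_nonempty Finset.univ_nonempty fun j _ ↦ h j
  simp [← Finset.mul_sum, hparseval] at hlt

lemma setOf_lt_norm_subset_iUnion {V : Type*} [Norm V] {a : ℝ} (ha : 0 < a) :
    {w : V | a < ‖w‖} ⊆ ⋃ n : ℕ, {w | ‖w‖ ∈ Set.Ico (2 ^ n * a) (2 * (2 ^ n * a))} := by
  intro w hw
  obtain ⟨n, hn, hn'⟩ := exists_nat_pow_near ((one_le_div ha).2 hw.le) one_lt_two
  rw [le_div_iff₀ ha] at hn
  rw [div_lt_iff₀ ha, pow_succ', mul_assoc] at hn'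
  exact Set.mem_iUnion.2 ⟨n, hn, hn'⟩

section Titchmarsh

variable {V E ι : Type*} [NormedAddCommGroup V] [InnerProductSpace ℝ V] [FiniteDimensional ℝ V]
  [MeasurableSpace V] [BorelSpace V] [NormedAddCommGroup E] [Fintype ι]
  {f : V → E}

lemma exists_enorm_sq_fourier_le [NormedSpace ℂ E] (b : OrthonormalBasis ι ℝ V) (N : ℕ)
    (hf : Integrable f) {A : ℝ} (hA : 0 < A) {w : V} (hw : ‖w‖ ∈ Set.Ico A (2 * A)) :
    ∃ j, ‖𝓕 f w‖ₑ ^ 2 ≤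
      Fintype.card ι ^ N * ‖𝓕 ((Δ_[(4 * A)⁻¹ • b j])^[N] f) w‖ₑ ^ 2 := by
  obtain ⟨j, hj⟩ := exists_norm_sq_le_card_mul_inner_sq b
    (norm_pos_iff.1 (hA.trans_le hw.1))
  refine ⟨j, ?_⟩
  set s : ℝ := inner ℝ ((4 * A)⁻¹ • b j) w with hs
  have hsA : 4 * A * s = inner ℝ (b j) w := by
    rw [hs, real_inner_smul_left, mul_inv_cancel_left₀ (by positivity)]
  have hs_le : |s| ≤ 1 / 2 := by
    have := abs_real_inner_le_norm (b j) w
    rw [b.norm_eq_one, one_mul, ← hsA, abs_mul, abs_of_pos (by positivity)] at this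
    nlinarith [hw.2]
  have hone : 1 ≤ Fintype.card ι * ‖(𝐞 s : ℂ) - 1‖ ^ 2 := by
    have hsq : (4 * |s|) ^ 2 ≤ ‖(𝐞 s : ℂ) - 1‖ ^ 2 :=
      pow_le_pow_left₀ (by positivity) (four_mul_abs_le_norm_fourierChar_sub_one hs_le) 2
    have hA2 : A ^ 2 * 1 ≤ A ^ 2 * (Fintype.card ι * (4 * |s|) ^ 2) := by
      rw [← hsA] at hj
      rw [mul_pow _ |s|, sq_abs]
      nlinarith [hw.1]
    exact (le_of_mul_le_mul_left hA2 (by positivity)).trans (by gcongr)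
  have hreal : ‖𝓕 f w‖ ^ 2 ≤ Fintype.card ι ^ N * ‖𝓕 ((Δ_[(4 * A)⁻¹ • b j])^[N] f) w‖ ^ 2 := by
    rw [fourier_fwdDiff_iter hf, norm_smul, norm_pow, mul_pow, ← pow_mul, mul_comm N, pow_mul,
      ← mul_assoc, ← mul_pow]
    exact le_mul_of_one_le_left (by positivity) (one_le_pow₀ hone)
  have := ENNReal.ofReal_le_ofReal hreal
  rwa [ENNReal.ofReal_mul (by positivity), ENNReal.ofReal_pow (by positivity),
    ENNReal.ofReal_pow (by positivity), ENNReal.ofReal_pow (by positivity), ofReal_norm,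
    ofReal_norm, ENNReal.ofReal_natCast] at this

variable [InnerProductSpace ℂ E] [CompleteSpace E]

lemma lintegral_annulus_enorm_sq_fourier_le (b : OrthonormalBasis ι ℝ V) (N : ℕ)
    (hf : Integrable f) (hf₂ : MemLp f 2) {A : ℝ} (hA : 0 < A) :
    ∫⁻ w in {w | ‖w‖ ∈ Set.Ico A (2 * A)}, ‖𝓕 f w‖ₑ ^ 2 ≤
      Fintype.card ι ^ N * ∑ j, ∫⁻ x, ‖(Δ_[(4 * A)⁻¹ • b j])^[N] f x‖ₑ ^ 2 := by
  have hmeas : MeasurableSet {w : V | ‖w‖ ∈ Set.Ico A (2 * A)} := measurable_norm measurableSet_Ico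
  have hcont (j : ι) : Continuous (𝓕 ((Δ_[(4 * A)⁻¹ • b j])^[N] f)) :=
    VectorFourier.fourierIntegral_continuous Real.continuous_fourierChar continuous_inner
      (integrable_fwdDiff_iter hf _ N)
  calc
    _ ≤ ∫⁻ w in {w | ‖w‖ ∈ Set.Ico A (2 * A)},
          Fintype.card ι ^ N * ∑ j, ‖𝓕 ((Δ_[(4 * A)⁻¹ • b j])^[N] f) w‖ₑ ^ 2 := by
      refine setLIntegral_mono' hmeas fun w hw ↦ ?_
      obtain ⟨j, hj⟩ := exists_enorm_sq_fourier_le b N hf hA hw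
      refine hj.trans ?_
      gcongr
      exact Finset.single_le_sum
        (f := fun j ↦ ‖𝓕 ((Δ_[(4 * A)⁻¹ • b j])^[N] f) w‖ₑ ^ 2) (by simp) (Finset.mem_univ j)
    _ ≤ ∫⁻ w, Fintype.card ι ^ N * ∑ j, ‖𝓕 ((Δ_[(4 * A)⁻¹ • b j])^[N] f) w‖ₑ ^ 2 :=
      setLIntegral_le_lintegral _ _
    _ = _ := by
      rw [lintegral_const_mul' _ _ (by finiteness), lintegral_finsetSum _ fun j _ ↦
        (hcont j).enorm.measurable.pow_const 2]
      congr! 2 with j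
      exact lintegral_enorm_sq_fourier_eq (integrable_fwdDiff_iter hf _ N)
        (memLp_fwdDiff_iter hf₂ _ N)

theorem lintegral_tail_enorm_sq_fourier_le (b : OrthonormalBasis ι ℝ V) (N : ℕ)
    (hf : Integrable f) (hf₂ : MemLp f 2) {C : ℝ≥0∞} {T β : ℝ}
    (hC : ∀ j, ∀ t, 0 < t → t ≤ T →
      ∫⁻ x, ‖(Δ_[t • b j])^[N] f x‖ₑ ^ 2 ≤ C * ENNReal.ofReal (t ^ β))
    {a : ℝ} (ha : 0 < a) (haT : (4 * a)⁻¹ ≤ T) :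
    ∫⁻ w in {w | a < ‖w‖}, ‖𝓕 f w‖ₑ ^ 2 ≤
      Fintype.card ι ^ (N + 1) * C * (1 - ENNReal.ofReal (2 ^ (-β)))⁻¹ *
        ENNReal.ofReal ((4 * a) ^ (-β)) := by
  have hannulus (n : ℕ) : ∫⁻ w in {w | ‖w‖ ∈ Set.Ico (2 ^ n * a) (2 * (2 ^ n * a))}, ‖𝓕 f w‖ₑ ^ 2 ≤
      Fintype.card ι ^ (N + 1) * C * ENNReal.ofReal ((4 * a) ^ (-β)) *
        ENNReal.ofReal (2 ^ (-β)) ^ n := by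
    have hpow : (4 * (2 ^ n * a))⁻¹ ^ β = (4 * a) ^ (-β) * (2 ^ (-β)) ^ n := by
      rw [← rpow_neg_eq_inv_rpow, mul_left_comm, mul_comm, mul_rpow (by positivity) (by positivity),
        ← rpow_natCast, ← rpow_natCast, ← rpow_mul two_pos.le, ← rpow_mul two_pos.le,
        mul_comm (n : ℝ)]
    refine (lintegral_annulus_enorm_sq_fourier_le b N hf hf₂ (by positivity)).trans ?_
    calc
      _ ≤ Fintype.card ι ^ N * ∑ _j : ι, C * ENNReal.ofReal ((4 * (2 ^ n * a))⁻¹ ^ β) := by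
        gcongr with j
        refine hC j _ (by positivity) (le_trans ?_ haT)
        gcongr
        exact le_mul_of_one_le_left ha.le (one_le_pow₀ one_le_two)
      _ = _ := by
        rw [hpow, ENNReal.ofReal_mul (by positivity), ENNReal.ofReal_pow (by positivity),
          Finset.sum_const, Finset.card_univ, nsmul_eq_mul]
        ring
  calc
    _ ≤ ∑' n : ℕ, ∫⁻ w in {w | ‖w‖ ∈ Set.Ico (2 ^ n * a) (2 * (2 ^ n * a))}, ‖𝓕 f w‖ₑ ^ 2 :=
      (lintegral_mono_set (setOf_lt_norm_subset_iUnion ha)).trans (lintegral_iUnion_le _ _)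
    _ ≤ ∑' n : ℕ, Fintype.card ι ^ (N + 1) * C * ENNReal.ofReal ((4 * a) ^ (-β)) *
        ENNReal.ofReal (2 ^ (-β)) ^ n := ENNReal.tsum_le_tsum hannulus
    _ = _ := by rw [ENNReal.tsum_mul_left, ENNReal.tsum_geometric, mul_right_comm]

end Titchmarsh

section FwdDiff

lemma fwdDiff_iter_congr {M M' G : Type*} [AddCommMonoid M] [AddCommMonoid M'] [AddCommGroup G]
    {f : M → G} {g : M' → G} {h x : M} {h' x' : M'} {N : ℕ}
    (hfg : ∀ k ≤ N, f (x + k • h) = g (x' + k • h')) :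
    (Δ_[h])^[N] f x = (Δ_[h'])^[N] g x' := by
  rw [fwdDiff_iter_eq_sum_shift, fwdDiff_iter_eq_sum_shift]
  exact Finset.sum_congr rfl fun k hk ↦ by rw [hfg k (Finset.mem_range_succ_iff.1 hk)]

lemma norm_fwdDiff_iter_le_two_pow_mul {M E : Type*} [AddCommMonoid M] [NormedAddCommGroup E]
    {f : M → E} {h x : M} {N : ℕ} {C : ℝ} (hC : ∀ k ≤ N, ‖f (x + k • h)‖ ≤ C) :
    ‖(Δ_[h])^[N] f x‖ ≤ 2 ^ N * C := by
  induction N generalizing x with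
  | zero => simpa using hC 0 le_rfl
  | succ N ih =>
    rw [Function.iterate_succ_apply']
    have hshift : ‖(Δ_[h])^[N] f (x + h)‖ ≤ 2 ^ N * C := ih fun k hk ↦ by
      simpa [succ_nsmul', add_assoc] using hC (k + 1) (by lia)
    have hself : ‖(Δ_[h])^[N] f x‖ ≤ 2 ^ N * C := ih fun k hk ↦ hC k (by lia)
    calc
      _ ≤ ‖(Δ_[h])^[N] f (x + h)‖ + ‖(Δ_[h])^[N] f x‖ := norm_sub_le _ _
      _ ≤ 2 ^ (N + 1) * C := by rw [pow_succ]; linarith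

variable {E : Type*} [NormedAddCommGroup E] [NormedSpace ℝ E] {t : ℝ}

lemma hasDerivAt_fwdDiff_iter {f f' : ℝ → E} (ht : 0 ≤ t) {N : ℕ} {s : ℝ}
    (hf : ∀ y ∈ Set.Icc s (s + N * t), HasDerivAt f (f' y) y) :
    HasDerivAt ((Δ_[t])^[N] f) ((Δ_[t])^[N] f' s) s := by
  induction N generalizing s with
  | zero => simpa using hf s (by simp)
  | succ N ih =>
    rw [Function.iterate_succ_apply', Function.iterate_succ_apply']
    push_cast at hf
    have hshift := ih (s := s + t) fun y hy ↦
      hf y ⟨by linarith [hy.1], by linarith [hy.2]⟩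
    have hself := ih (s := s) fun y hy ↦ hf y ⟨hy.1, by linarith [hy.2]⟩
    exact (hshift.comp_add_const s t).sub hself

lemma norm_fwdDiff_iter_le_of_hasDerivAt {f : ℕ → ℝ → E} (ht : 0 ≤ t) {C : ℝ} {N m : ℕ} {s : ℝ}
    (hf : ∀ n, ∀ y ∈ Set.Icc s (s + N * t), HasDerivAt (f n) (f (n + 1) y) y)
    (hC : ∀ y ∈ Set.Icc s (s + N * t), ‖f (m + N) y‖ ≤ C) :
    ‖(Δ_[t])^[N] (f m) s‖ ≤ C * t ^ N := by
  induction N generalizing m s with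
  | zero => simpa using hC s (by simp)
  | succ N ih =>
    have hsub {r : ℝ} (hr : r ∈ Set.Icc s (s + t)) :
        Set.Icc r (r + N * t) ⊆ Set.Icc s (s + (N + 1 : ℕ) * t) := by
      push_cast
      exact Set.Icc_subset_Icc hr.1 (by linarith [hr.2])
    have hderiv : ∀ r ∈ Set.Icc s (s + t), HasDerivWithinAt ((Δ_[t])^[N] (f m))
        ((Δ_[t])^[N] (f (m + 1)) r) (Set.Icc s (s + t)) r := fun r hr ↦
      (hasDerivAt_fwdDiff_iter ht fun y hy ↦ hf m y (hsub hr hy)).hasDerivWithinAt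
    have hbound : ∀ r ∈ Set.Icc s (s + t), ‖(Δ_[t])^[N] (f (m + 1)) r‖ ≤ C * t ^ N := fun r hr ↦
      ih (fun n y hy ↦ hf n y (hsub hr hy)) fun y hy ↦ by
        simpa only [add_assoc, add_comm 1] using hC y (hsub hr hy)
    have hmvt := (convex_Icc s (s + t)).norm_image_sub_le_of_norm_hasDerivWithin_le hderiv hbound
      (Set.left_mem_Icc.2 (by linarith)) (Set.right_mem_Icc.2 (by linarith))
    rw [Function.iterate_succ_apply', fwdDiff, pow_succ, ← mul_assoc]
    simpa [abs_of_nonneg ht] using hmvt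

end FwdDiff

section BochnerRiesz

variable {V : Type*} [NormedAddCommGroup V]

/-- The Bochner–Riesz function `(1 - ‖x‖²)_+^z`. It vanishes on the unit sphere for every `z`,
including `z = 0`. -/
noncomputable def bochnerRiesz (z : ℂ) (x : V) : ℂ :=
  if ‖x‖ < 1 then ((1 - ‖x‖ ^ 2 : ℝ) : ℂ) ^ z else 0

lemma bochnerRiesz_of_one_le {z : ℂ} {x : V} (hx : 1 ≤ ‖x‖) : bochnerRiesz z x = 0 :=
  if_neg hx.not_gt

lemma one_sub_norm_sq_pos {x : V} (hx : ‖x‖ < 1) : 0 < 1 - ‖x‖ ^ 2 := by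
  nlinarith [norm_nonneg x]

lemma norm_bochnerRiesz_le {z : ℂ} (hz : 0 ≤ z.re) {x : V} {δ : ℝ} (hδ : 0 ≤ δ)
    (hx : 1 - ‖x‖ ≤ δ) : ‖bochnerRiesz z x‖ ≤ (2 * δ) ^ z.re := by
  rcases lt_or_ge ‖x‖ 1 with h | h
  · rw [bochnerRiesz, if_pos h, Complex.norm_cpow_eq_rpow_re_of_pos (one_sub_norm_sq_pos h)]
    exact rpow_le_rpow (one_sub_norm_sq_pos h).le (by nlinarith [norm_nonneg x]) hz
  · rw [bochnerRiesz_of_one_le h, norm_zero]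
    positivity

lemma abs_norm_add_smul_sub_norm_le [NormedSpace ℝ V] {v x : V} (hv : ‖v‖ = 1)
    {s r : ℝ} (hs : s ∈ Set.Icc 0 r) : |‖x + s • v‖ - ‖x‖| ≤ r := by
  have := abs_norm_sub_norm_le (x + s • v) x
  rw [add_sub_cancel_left, norm_smul, hv, mul_one, Real.norm_of_nonneg hs.1] at this
  exact this.trans hs.2

variable [InnerProductSpace ℝ V]

/-- The coefficients of the derivatives of `(1 - ‖x‖²)^z q(x)` in the direction `v`: inside the unit
ball the `n`-th derivative is `(1 - ‖x‖²)^(z - n) * bochnerRieszCoeff z v q n x`. -/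
noncomputable def bochnerRieszCoeff (z : ℂ) (v : V) (q : V → ℂ) : ℕ → V → ℂ
  | 0 => q
  | n + 1 => fun x ↦ ((1 - ‖x‖ ^ 2 : ℝ) : ℂ) * fderiv ℝ (bochnerRieszCoeff z v q n) x v
      - 2 * (z - n) * ((inner ℝ x v : ℝ) : ℂ) * bochnerRieszCoeff z v q n x

variable {z : ℂ} {v x : V} {q : V → ℂ}

lemma contDiff_bochnerRieszCoeff (hq : ContDiff ℝ ∞ q) (n : ℕ) :
    ContDiff ℝ ∞ (bochnerRieszCoeff z v q n) := by
  induction n with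
  | zero => exact hq
  | succ n ih =>
    have hderiv : ContDiff ℝ ∞ fun x ↦ fderiv ℝ (bochnerRieszCoeff z v q n) x v :=
      (ih.fderiv_right (m := ∞) (by simp)).clm_apply contDiff_const
    have hnorm : ContDiff ℝ ∞ fun x : V ↦ ((1 - ‖x‖ ^ 2 : ℝ) : ℂ) :=
      Complex.ofRealCLM.contDiff.comp (contDiff_const.sub (contDiff_norm_sq ℝ))
    have hinner : ContDiff ℝ ∞ fun x : V ↦ ((inner ℝ x v : ℝ) : ℂ) :=
      Complex.ofRealCLM.contDiff.comp (contDiff_id.inner ℝ contDiff_const)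
    exact (hnorm.mul hderiv).sub ((contDiff_const.mul hinner).mul ih)

lemma hasDerivAt_cpow_mul_bochnerRieszCoeff (hq : ContDiff ℝ ∞ q) (n : ℕ) {s : ℝ}
    (hs : ‖x + s • v‖ < 1) :
    HasDerivAt (fun s : ℝ ↦ ((1 - ‖x + s • v‖ ^ 2 : ℝ) : ℂ) ^ (z - n) *
        bochnerRieszCoeff z v q n (x + s • v))
      (((1 - ‖x + s • v‖ ^ 2 : ℝ) : ℂ) ^ (z - (n + 1 : ℕ)) *
        bochnerRieszCoeff z v q (n + 1) (x + s • v)) s := by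
  have hpos := one_sub_norm_sq_pos hs
  have hne : ((1 - ‖x + s • v‖ ^ 2 : ℝ) : ℂ) ≠ 0 := Complex.ofReal_ne_zero.2 hpos.ne'
  have hline : HasDerivAt (fun s : ℝ ↦ x + s • v) v s := by
    simpa using ((hasDerivAt_id s).smul_const v).const_add x
  have hcoeff := (((contDiff_bochnerRieszCoeff (z := z) (v := v) hq n).differentiable (by simp))
    (x + s • v)).hasFDerivAt.comp_hasDerivAt s hline
  have hbase : HasDerivAt (fun s : ℝ ↦ ((1 - ‖x + s • v‖ ^ 2 : ℝ) : ℂ))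
      ((-(2 * inner ℝ (x + s • v) v) : ℝ) : ℂ) s :=
    HasDerivAt.ofReal_comp (by simpa using hline.norm_sq.const_sub 1)
  have hcpow := HasDerivAt.comp s
    ((hasDerivAt_id _).cpow_const (c := z - n) (Or.inl (by rwa [id, Complex.ofReal_re]))) hbase
  refine (hcpow.mul hcoeff).congr_deriv ?_
  have hsplit : ((1 - ‖x + s • v‖ ^ 2 : ℝ) : ℂ) ^ (z - n)
      = ((1 - ‖x + s • v‖ ^ 2 : ℝ) : ℂ) ^ (z - n - 1) * ((1 - ‖x + s • v‖ ^ 2 : ℝ) : ℂ) := by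
    rw [Complex.cpow_sub _ 1 hne, Complex.cpow_one, div_mul_cancel₀ _ hne]
  simp only [bochnerRieszCoeff, Function.comp, id]
  rw [hsplit, show z - ((n + 1 : ℕ) : ℂ) = z - n - 1 by push_cast; ring]
  push_cast
  ring

end BochnerRiesz

section BochnerRieszDifferences

variable {V : Type*} [NormedAddCommGroup V] {N : ℕ} {z : ℂ} {v x : V} {q : V → ℂ} {t : ℝ}

lemma fwdDiff_iter_bochnerRiesz_mul_eq_zero [NormedSpace ℝ V] (hv : ‖v‖ = 1) (ht : 0 ≤ t)
    (hx : 1 + N * t ≤ ‖x‖) :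
    (Δ_[t • v])^[N] (fun x ↦ bochnerRiesz z x * q x) x = 0 := by
  have hzero : ∀ k ≤ N, ‖bochnerRiesz z (x + k • t • v) * q (x + k • t • v)‖ ≤ 0 := fun k hk ↦ by
    have hkt : (k * t : ℝ) ∈ Set.Icc 0 (N * t) := ⟨by positivity, by gcongr⟩
    have hnorm := abs_le.1 (abs_norm_add_smul_sub_norm_le (x := x) hv hkt)
    rw [← Nat.cast_smul_eq_nsmul ℝ k, smul_smul, bochnerRiesz_of_one_le (by linarith [hnorm.1]),
      zero_mul, norm_zero]
  simpa using norm_fwdDiff_iter_le_two_pow_mul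
    (f := fun x ↦ bochnerRiesz z x * q x) (h := t • v) hzero

lemma norm_fwdDiff_iter_bochnerRiesz_mul_le_of_abs_le [NormedSpace ℝ V] (hz : 0 ≤ z.re)
    (hzN : z.re ≤ N) (hv : ‖v‖ = 1) (ht : 0 < t) {B : ℝ}
    (hB : ∀ y ∈ Metric.closedBall (0 : V) 1, ‖q y‖ ≤ B) (hx : |1 - ‖x‖| ≤ (2 * N + 1) * t) :
    ‖(Δ_[t • v])^[N] (fun x ↦ bochnerRiesz z x * q x) x‖ ≤
      2 ^ N * (2 * (3 * N + 1)) ^ z.re * B * (2 * N + 2) ^ (N - z.re) *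
        (t ^ N * (t + |1 - ‖x‖|) ^ (z.re - N)) := by
  have hB₀ : 0 ≤ B := (norm_nonneg _).trans (hB 0 (by simp))
  have hsample : ∀ k ≤ N, ‖bochnerRiesz z (x + k • t • v) * q (x + k • t • v)‖ ≤
      (2 * ((3 * N + 1) * t)) ^ z.re * B := fun k hk ↦ by
    have hkt : (k * t : ℝ) ∈ Set.Icc 0 (N * t) := ⟨by positivity, by gcongr⟩
    have hnorm := abs_le.1 (abs_norm_add_smul_sub_norm_le (x := x) hv hkt)
    rw [← Nat.cast_smul_eq_nsmul ℝ k, smul_smul, norm_mul]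
    rcases lt_or_ge ‖x + (k * t) • v‖ 1 with h | h
    · gcongr
      · exact norm_bochnerRiesz_le hz (by positivity) (by linarith [hnorm.1, (abs_le.1 hx).2])
      · exact hB _ (by simpa using h.le)
    · rw [bochnerRiesz_of_one_le h, norm_zero, zero_mul]
      positivity
  have hpow : t ^ z.re ≤
      (2 * N + 2) ^ (N - z.re) * (t ^ N * (t + |1 - ‖x‖|) ^ (z.re - N)) := calc
    t ^ z.re = (2 * N + 2) ^ (N - z.re) * (t ^ N * ((2 * N + 2) * t) ^ (z.re - N)) := by
      rw [mul_rpow (by positivity) ht.le, ← neg_sub (N : ℝ), rpow_neg (by positivity),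
        rpow_neg ht.le, rpow_sub ht, rpow_natCast]
      field_simp
    _ ≤ _ := by
      gcongr _ * (_ * ?_)
      exact rpow_le_rpow_of_nonpos (by positivity) (by linarith) (by linarith)
  calc
    _ ≤ 2 ^ N * ((2 * ((3 * N + 1) * t)) ^ z.re * B) :=
      norm_fwdDiff_iter_le_two_pow_mul (f := fun x ↦ bochnerRiesz z x * q x) hsample
    _ = 2 ^ N * (2 * (3 * N + 1)) ^ z.re * B * t ^ z.re := by
      rw [← mul_assoc 2, mul_rpow (by positivity) ht.le]
      ring
    _ ≤ _ := by
      rw [mul_assoc _ ((2 * N + 2 : ℝ) ^ _)]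
      gcongr

variable [InnerProductSpace ℝ V]

lemma norm_fwdDiff_iter_bochnerRiesz_mul_le_of_le_one_sub_norm (hzN : z.re ≤ N) (hv : ‖v‖ = 1)
    (hq : ContDiff ℝ ∞ q) (ht : 0 < t) {B : ℝ}
    (hB : ∀ y ∈ Metric.closedBall (0 : V) 1, ‖bochnerRieszCoeff z v q N y‖ ≤ B)
    (hx : (2 * N + 1) * t ≤ 1 - ‖x‖) :
    ‖(Δ_[t • v])^[N] (fun x ↦ bochnerRiesz z x * q x) x‖ ≤
      4⁻¹ ^ (z.re - N) * B * (t ^ N * (t + |1 - ‖x‖|) ^ (z.re - N)) := by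
  have hNt : 0 ≤ N * t := by positivity
  have hnear {s : ℝ} (hs : s ∈ Set.Icc 0 (N * t)) : ‖x + s • v‖ ≤ ‖x‖ + N * t := by
    linarith [(abs_le.1 (abs_norm_add_smul_sub_norm_le (x := x) hv hs)).2]
  have hinside {s : ℝ} (hs : s ∈ Set.Icc 0 (N * t)) : ‖x + s • v‖ < 1 := by
    linarith [hnear hs]
  have hline : (Δ_[t • v])^[N] (fun x ↦ bochnerRiesz z x * q x) x =
      (Δ_[t])^[N] (fun s : ℝ ↦ ((1 - ‖x + s • v‖ ^ 2 : ℝ) : ℂ) ^ (z - (0 : ℕ)) *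
        bochnerRieszCoeff z v q 0 (x + s • v)) 0 :=
    fwdDiff_iter_congr fun k hk ↦ by
      have hlt := hinside (s := k * t) ⟨by positivity, by gcongr⟩
      simp [← Nat.cast_smul_eq_nsmul ℝ k, smul_smul, bochnerRiesz, hlt, bochnerRieszCoeff]
  rw [hline, mul_comm (t ^ N), ← mul_assoc]
  refine norm_fwdDiff_iter_le_of_hasDerivAt (m := 0) (f := fun n (s : ℝ) ↦
    ((1 - ‖x + s • v‖ ^ 2 : ℝ) : ℂ) ^ (z - n) * bochnerRieszCoeff z v q n (x + s • v)) ht.le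
    (fun n s hs ↦ hasDerivAt_cpow_mul_bochnerRieszCoeff hq n (hinside (by simpa using hs)))
    fun s hs ↦ ?_
  rw [zero_add] at hs
  have hpos := one_sub_norm_sq_pos (hinside hs)
  rw [zero_add, norm_mul, Complex.norm_cpow_eq_rpow_re_of_pos hpos, mul_right_comm,
    ← mul_rpow (by norm_num) (by positivity), Complex.sub_re, Complex.natCast_re]
  refine mul_le_mul ?_ ?_ (norm_nonneg _) (by positivity)
  · rw [abs_of_nonneg (by nlinarith)]
    refine rpow_le_rpow_of_nonpos (by nlinarith) ?_ (by linarith)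
    nlinarith [norm_nonneg (x + s • v), hnear hs]
  · exact hB _ (by simpa using (hinside hs).le)

lemma exists_norm_fwdDiff_iter_bochnerRiesz_mul_le [FiniteDimensional ℝ V] (hz : 0 ≤ z.re)
    (hzN : z.re ≤ N) (hv : ‖v‖ = 1) (hq : ContDiff ℝ ∞ q) :
    ∃ C, 0 ≤ C ∧ ∀ t, 0 < t → ∀ x, ‖(Δ_[t • v])^[N] (fun x ↦ bochnerRiesz z x * q x) x‖ ≤
      C * (t ^ N * (t + |1 - ‖x‖|) ^ (z.re - N)) := by
  have hcompact : IsCompact (Metric.closedBall (0 : V) 1) := isCompact_closedBall 0 1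
  obtain ⟨A, hA⟩ := hcompact.exists_bound_of_continuousOn
    (contDiff_bochnerRieszCoeff (z := z) (v := v) hq N).continuous.continuousOn
  obtain ⟨B, hB⟩ := hcompact.exists_bound_of_continuousOn hq.continuous.continuousOn
  have hA₀ : 0 ≤ A := (norm_nonneg _).trans (hA 0 (by simp))
  have : 0 ≤ B := (norm_nonneg _).trans (hB 0 (by simp))
  refine ⟨max (4⁻¹ ^ (z.re - N) * A)
    (2 ^ N * (2 * (3 * N + 1)) ^ z.re * B * (2 * N + 2) ^ (N - z.re)),
    le_max_of_le_left (by positivity), fun t ht x ↦ ?_⟩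
  rcases le_total |1 - ‖x‖| ((2 * N + 1) * t) with hnear | hfar
  · refine (norm_fwdDiff_iter_bochnerRiesz_mul_le_of_abs_le hz hzN hv ht hB hnear).trans ?_
    gcongr
    exact le_max_right _ _
  rcases le_abs.1 hfar with hinside | houtside
  · refine (norm_fwdDiff_iter_bochnerRiesz_mul_le_of_le_one_sub_norm hzN hv hq ht hA
      hinside).trans ?_
    gcongr
    exact le_max_left _ _
  · rw [fwdDiff_iter_bochnerRiesz_mul_eq_zero hv ht.le (by nlinarith), norm_zero]
    positivity

end BochnerRieszDifferences

section Radial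

variable {V : Type*} [NormedAddCommGroup V] [NormedSpace ℝ V] [FiniteDimensional ℝ V]
  [MeasurableSpace V] [BorelSpace V] (μ : Measure V) [μ.IsAddHaarMeasure]

lemma lintegral_fun_norm_addHaar [Nontrivial V] {f : ℝ → ℝ≥0∞} (hf : Measurable f) :
    ∫⁻ x, f ‖x‖ ∂μ = μ.toSphere Set.univ *
      ∫⁻ r in Set.Ioi 0, ENNReal.ofReal (r ^ (Module.finrank ℝ V - 1)) * f r := by
  have hpolar := μ.measurePreserving_homeomorphUnitSphereProd.lintegral_comp_emb
    (Homeomorph.measurableEmbedding _) fun x ↦ f x.2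
  simp only [homeomorphUnitSphereProd_apply_snd_coe] at hpolar
  calc
    ∫⁻ x, f ‖x‖ ∂μ = ∫⁻ x : ({0}ᶜ : Set V), f ‖(x : V)‖ ∂μ.comap (↑) := by
      rw [lintegral_subtype_comap (measurableSet_singleton _).compl fun x ↦ f ‖x‖,
        restrict_compl_singleton]
    _ = μ.toSphere Set.univ * ∫⁻ r : Set.Ioi (0 : ℝ), f r
          ∂.volumeIoiPow (Module.finrank ℝ V - 1) := by
      rw [hpolar, lintegral_prod _ (by fun_prop)]
      simp only [lintegral_const, mul_comm]
    _ = _ := by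
      rw [Measure.volumeIoiPow, lintegral_withDensity_eq_lintegral_mul _ (by fun_prop)
        (by fun_prop), ← lintegral_subtype_comap measurableSet_Ioi]
      rfl

lemma lintegral_comp_smul (f : V → ℝ≥0∞) {r : ℝ} (hr : r ≠ 0) :
    ∫⁻ x, f (r • x) ∂μ = ENNReal.ofReal |(r ^ Module.finrank ℝ V)⁻¹| * ∫⁻ x, f x ∂μ := by
  rw [← smul_eq_mul, ← lintegral_smul_measure, ← Measure.map_addHaar_smul μ hr]
  exact ((Homeomorph.smulOfNeZero r hr).measurableEmbedding.lintegral_map f).symm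

lemma setLIntegral_norm_gt_comp_smul (f : V → ℝ≥0∞) {r : ℝ} (hr : r ≠ 0) (a : ℝ) :
    ∫⁻ x in {x | a < ‖x‖}, f (r • x) ∂μ =
      ENNReal.ofReal |(r ^ Module.finrank ℝ V)⁻¹| * ∫⁻ x in {x | |r| * a < ‖x‖}, f x ∂μ := by
  have hmeas (b : ℝ) : MeasurableSet {x : V | b < ‖x‖} :=
    measurableSet_lt measurable_const measurable_norm
  rw [← lintegral_indicator (hmeas a), ← lintegral_indicator (hmeas _),
    ← lintegral_comp_smul μ _ hr]
  congr with x
  simp [Set.indicator, norm_smul, abs_pos.2 hr]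

lemma lintegral_add_abs_one_sub_rpow {t : ℝ} (ht : 0 < t) (p : ℝ) :
    ∫⁻ r, ENNReal.ofReal ((t + |1 - r|) ^ (-p)) =
      ENNReal.ofReal (t ^ (1 - p)) * ∫⁻ u : ℝ, ENNReal.ofReal ((1 + ‖u‖) ^ (-p)) := by
  have hscale (s : ℝ) : ENNReal.ofReal ((t + |s|) ^ (-p)) =
      ENNReal.ofReal (t ^ (-p)) * ENNReal.ofReal ((1 + ‖t⁻¹ • s‖) ^ (-p)) := by
    rw [← ENNReal.ofReal_mul (by positivity), ← mul_rpow ht.le (by positivity), norm_smul,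
      norm_of_nonneg (inv_nonneg.2 ht.le), mul_add, mul_one, mul_inv_cancel_left₀ ht.ne',
      Real.norm_eq_abs]
  rw [lintegral_sub_left_eq_self (fun s ↦ ENNReal.ofReal ((t + |s|) ^ (-p))) 1]
  simp_rw [hscale]
  rw [lintegral_const_mul _ (by fun_prop), lintegral_comp_smul _
    (fun u : ℝ ↦ ENNReal.ofReal ((1 + ‖u‖) ^ (-p))) (inv_ne_zero ht.ne'), ← mul_assoc,
    ← ENNReal.ofReal_mul (by positivity)]
  simp only [Module.finrank_self, pow_one, inv_inv, abs_of_pos ht]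
  rw [← rpow_add_one ht.ne', neg_add_eq_sub]

lemma setLIntegral_ball_add_abs_one_sub_norm_rpow_le [Nontrivial V] {t : ℝ} (ht : 0 < t)
    (p ρ : ℝ) :
    ∫⁻ x in Metric.ball 0 ρ, ENNReal.ofReal ((t + |1 - ‖x‖|) ^ (-p)) ∂μ ≤
      μ.toSphere Set.univ * (ENNReal.ofReal (ρ ^ (Module.finrank ℝ V - 1)) *
        (ENNReal.ofReal (t ^ (1 - p)) * ∫⁻ u : ℝ, ENNReal.ofReal ((1 + ‖u‖) ^ (-p)))) := by
  have hindicator : (Metric.ball (0 : V) ρ).indicator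
      (fun x ↦ ENNReal.ofReal ((t + |1 - ‖x‖|) ^ (-p))) =
      fun x ↦ (Set.Iio ρ).indicator (fun r ↦ ENNReal.ofReal ((t + |1 - r|) ^ (-p))) ‖x‖ := by
    ext x
    by_cases hx : ‖x‖ < ρ <;> simp [hx]
  rw [← lintegral_indicator Metric.isOpen_ball.measurableSet, hindicator,
    lintegral_fun_norm_addHaar μ (Measurable.indicator (by fun_prop) measurableSet_Iio),
    ← lintegral_add_abs_one_sub_rpow ht,
    ← lintegral_const_mul (ENNReal.ofReal (ρ ^ _)) (by fun_prop)]
  refine mul_le_mul_right ?_ _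
  refine (lintegral_mono_ae ?_).trans (setLIntegral_le_lintegral (Set.Ioi 0) _)
  filter_upwards [ae_restrict_mem measurableSet_Ioi] with r hr
  rw [Set.mem_Ioi] at hr
  rcases lt_or_ge r ρ with h | h
  · rw [Set.indicator_of_mem (Set.mem_Iio.2 h)]
    gcongr
  · simp [Set.indicator_of_notMem (Set.notMem_Iio.2 h)]

end Radial

section BochnerRieszL2

variable {V : Type*} [NormedAddCommGroup V] [InnerProductSpace ℝ V] [FiniteDimensional ℝ V]
  [MeasurableSpace V] [BorelSpace V] {N : ℕ} {z : ℂ} {q : V → ℂ}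

lemma exists_lintegral_enorm_sq_fwdDiff_iter_bochnerRiesz_mul_le [Nontrivial V] (μ : Measure V)
    [μ.IsAddHaarMeasure] (hz : 0 ≤ z.re) (hzN : z.re + 1 / 2 < N) (hq : ContDiff ℝ ∞ q) {v : V}
    (hv : ‖v‖ = 1) (T : ℝ) :
    ∃ C : ℝ≥0∞, C ≠ ⊤ ∧ ∀ t, 0 < t → t ≤ T →
      ∫⁻ x, ‖(Δ_[t • v])^[N] (fun x ↦ bochnerRiesz z x * q x) x‖ₑ ^ 2 ∂μ ≤
        C * ENNReal.ofReal (t ^ (2 * z.re + 1)) := by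
  obtain ⟨A, _, hA⟩ := exists_norm_fwdDiff_iter_bochnerRiesz_mul_le hz (by linarith) hv hq
  set p : ℝ := 2 * (N - z.re) with hp
  set K := ∫⁻ u : ℝ, ENNReal.ofReal ((1 + ‖u‖) ^ (-p))
  have hp_one : 1 < p := by linarith
  have hK : K ≠ ⊤ := (finite_integral_one_add_norm (by simpa using hp_one)).ne
  set ρ : ℝ := 1 + N * T
  refine ⟨ENNReal.ofReal (A ^ 2) * (μ.toSphere Set.univ *
    (ENNReal.ofReal (ρ ^ (Module.finrank ℝ V - 1)) * K)), by finiteness, fun t ht htT ↦ ?_⟩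
  have hpoint (x : V) : ‖(Δ_[t • v])^[N] (fun x ↦ bochnerRiesz z x * q x) x‖ₑ ^ 2 ≤
      (Metric.ball 0 ρ).indicator (fun x ↦ ENNReal.ofReal (A ^ 2 * t ^ (2 * N)) *
        ENNReal.ofReal ((t + |1 - ‖x‖|) ^ (-p))) x := by
    rcases lt_or_ge ‖x‖ ρ with h | h
    · rw [Set.indicator_of_mem (mem_ball_zero_iff.2 h), ← ENNReal.ofReal_mul (by positivity),
        ← ofReal_norm, ← ENNReal.ofReal_pow (norm_nonneg _)]
      gcongr
      refine (pow_le_pow_left₀ (norm_nonneg _) (hA t ht x) 2).trans_eq ?_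
      rw [mul_pow, mul_pow, ← pow_mul, mul_comm N, ← rpow_mul_natCast (by positivity), mul_assoc,
        hp]
      congr 3
      push_cast
      ring
    · rw [fwdDiff_iter_bochnerRiesz_mul_eq_zero hv ht.le (h.trans' (by simp only [ρ]; gcongr))]
      simp
  have hpow : t ^ (2 * N) * t ^ (1 - p) = t ^ (2 * z.re + 1) := by
    rw [← rpow_natCast, ← rpow_add ht, hp]
    congr 1
    push_cast
    ring
  calc
    _ ≤ ∫⁻ x in Metric.ball 0 ρ, ENNReal.ofReal (A ^ 2 * t ^ (2 * N)) *
        ENNReal.ofReal ((t + |1 - ‖x‖|) ^ (-p)) ∂μ := by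
      rw [← lintegral_indicator Metric.isOpen_ball.measurableSet]
      exact lintegral_mono hpoint
    _ ≤ ENNReal.ofReal (A ^ 2 * t ^ (2 * N)) * (μ.toSphere Set.univ *
        (ENNReal.ofReal (ρ ^ (Module.finrank ℝ V - 1)) * (ENNReal.ofReal (t ^ (1 - p)) * K))) := by
      rw [lintegral_const_mul _ (by fun_prop)]
      gcongr
      exact setLIntegral_ball_add_abs_one_sub_norm_rpow_le μ ht p ρ
    _ = _ := by
      rw [← hpow, ENNReal.ofReal_mul (by positivity), ENNReal.ofReal_mul (by positivity)]
      ring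

end BochnerRieszL2

section BochnerRieszTail

variable {V : Type*} {z : ℂ} {q : V → ℂ}

lemma measurable_bochnerRiesz [NormedAddCommGroup V] [MeasurableSpace V] [OpensMeasurableSpace V]
    (z : ℂ) : Measurable (bochnerRiesz z : V → ℂ) :=
  Measurable.ite (measurableSet_lt (by fun_prop) (by fun_prop)) (by fun_prop) measurable_const

lemma hasCompactSupport_bochnerRiesz [NormedAddCommGroup V] [ProperSpace V] (z : ℂ) :
    HasCompactSupport (bochnerRiesz z : V → ℂ) :=
  .intro (isCompact_closedBall 0 1) fun x hx ↦
    bochnerRiesz_of_one_le (by simpa using (not_le.1 (mt mem_closedBall_zero_iff.2 hx)).le)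

variable [NormedAddCommGroup V] [InnerProductSpace ℝ V] [FiniteDimensional ℝ V]
  [MeasurableSpace V] [BorelSpace V]

lemma memLp_bochnerRiesz_mul (hz : 0 ≤ z.re) (hq : Continuous q) (p : ℝ≥0∞) (μ : Measure V)
    [IsFiniteMeasureOnCompacts μ] :
    MemLp (fun x ↦ bochnerRiesz z x * q x) p μ := by
  obtain ⟨B, hB⟩ :=
    (isCompact_closedBall (0 : V) 1).exists_bound_of_continuousOn hq.continuousOn
  have hB₀ : 0 ≤ B := (norm_nonneg _).trans (hB 0 (by simp))
  refine (hasCompactSupport_bochnerRiesz z).mul_right.memLp_of_bound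
    ((measurable_bochnerRiesz z).mul hq.measurable).aestronglyMeasurable (2 ^ z.re * B)
    (.of_forall fun x ↦ ?_)
  rw [Pi.mul_apply]
  rcases le_or_gt 1 ‖x‖ with h | h
  · rw [bochnerRiesz_of_one_le h, zero_mul, norm_zero]
    positivity
  · rw [norm_mul]
    gcongr
    · simpa using norm_bochnerRiesz_le hz zero_le_one (sub_le_self 1 (norm_nonneg x))
    · exact hB x (by simpa using h.le)

theorem exists_lintegral_tail_enorm_sq_fourier_bochnerRiesz_mul_le [Nontrivial V] (hz : 0 ≤ z.re)
    (hq : ContDiff ℝ ∞ q) {a₀ : ℝ} (ha₀ : 0 < a₀) :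
    ∃ C : ℝ≥0∞, C ≠ ⊤ ∧ ∀ a, a₀ ≤ a →
      ∫⁻ w in {w | a < ‖w‖}, ‖𝓕 (fun x : V ↦ bochnerRiesz z x * q x) w‖ₑ ^ 2 ≤
        C * ENNReal.ofReal (a ^ (-(2 * z.re + 1))) := by
  obtain ⟨N, hN⟩ := exists_nat_gt (z.re + 1 / 2)
  set b := stdOrthonormalBasis ℝ V
  set β : ℝ := 2 * z.re + 1
  choose C hC_top hC using fun j ↦ exists_lintegral_enorm_sq_fwdDiff_iter_bochnerRiesz_mul_le
    volume hz hN hq (b.norm_eq_one j) (4 * a₀)⁻¹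
  have hβ_lt : ENNReal.ofReal (2 ^ (-β)) < 1 := by
    rw [ENNReal.ofReal_lt_one]
    exact rpow_lt_one_of_one_lt_of_neg one_lt_two (by linarith)
  let A : ℝ≥0∞ := Fintype.card (Fin (Module.finrank ℝ V)) ^ (N + 1) * (∑ j, C j) *
    (1 - ENNReal.ofReal (2 ^ (-β)))⁻¹
  have hA : A ≠ ⊤ := ENNReal.mul_ne_top
    (ENNReal.mul_ne_top (by finiteness) (ENNReal.sum_ne_top.2 fun j _ ↦ hC_top j))
    (ENNReal.inv_ne_top.2 (tsub_pos_of_lt hβ_lt).ne')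
  refine ⟨A * ENNReal.ofReal (4 ^ (-β)), by finiteness, fun a ha ↦ ?_⟩
  have ha_pos : 0 < a := ha₀.trans_le ha
  refine (lintegral_tail_enorm_sq_fourier_le (C := ∑ j, C j) (β := β) b N
    (memLp_one_iff_integrable.1 (memLp_bochnerRiesz_mul hz hq.continuous 1 _))
    (memLp_bochnerRiesz_mul hz hq.continuous 2 _) (fun j t ht htT ↦ (hC j t ht htT).trans ?_)
    ha_pos (by gcongr)).trans_eq ?_
  · gcongr
    exact Finset.single_le_sum (fun _ _ ↦ zero_le) (Finset.mem_univ j)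
  · rw [mul_rpow (by norm_num) ha_pos.le, ENNReal.ofReal_mul (by positivity), ← mul_assoc]

end BochnerRieszTail

lemma integrable_continuous_mul_of_hasCompactSupport {X : Type*} [TopologicalSpace X] [T2Space X]
    [MeasurableSpace X] [OpensMeasurableSpace X] {μ : Measure X} {q g : X → ℂ} (hq : Continuous q)
    (hg : Integrable g μ) (hgc : HasCompactSupport g) : Integrable (fun x ↦ q x * g x) μ :=
  (integrableOn_iff_integrable_of_support_subset (s := tsupport g)
    ((Function.support_mul_subset_right q g).trans (subset_tsupport g))).1
    (hg.integrableOn.continuousOn_mul hq.continuousOn hgc)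

section InvFT

variable {l : ℕ} {g : EuclideanSpace ℝ (Fin l) → ℂ}

lemma invFT_eq_fourier (g : EuclideanSpace ℝ (Fin l) → ℂ) (H : EuclideanSpace ℝ (Fin l)) :
    invFT l g H = (((2 * π) ^ l : ℝ) : ℂ)⁻¹ * 𝓕 g (-(2 * π)⁻¹ • H) := by
  rw [invFT, Real.fourier_eq']
  congr 2 with x
  rw [smul_eq_mul, mul_comm, inner_smul_right]
  congr 2
  push_cast
  field_simp

lemma continuous_invFT (hg : Integrable g) : Continuous (invFT l g) := by
  have h𝓕 : Continuous (𝓕 g) :=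
    VectorFourier.fourierIntegral_continuous Real.continuous_fourierChar continuous_inner hg
  simp only [funext (invFT_eq_fourier g)]
  fun_prop

lemma invFT_const_mul (c : ℂ) (g : EuclideanSpace ℝ (Fin l) → ℂ) :
    invFT l (fun x ↦ c * g x) = fun H ↦ c * invFT l g H := by
  ext H
  simp only [invFT, mul_assoc, integral_const_mul]
  ring

lemma invFT_comp_inv_smul (g : EuclideanSpace ℝ (Fin l) → ℂ) {r : ℝ} (hr : 0 < r) :
    invFT l (fun x ↦ g (r⁻¹ • x)) = fun H ↦ (r : ℂ) ^ l * invFT l g (r • H) := by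
  ext H
  have hsmul (x : EuclideanSpace ℝ (Fin l)) :
      inner ℝ x H = inner ℝ (r⁻¹ • x) (r • H) := by
    rw [inner_smul_left, inner_smul_right]
    simp [hr.ne']
  simp only [invFT, hsmul]
  rw [Measure.integral_comp_inv_smul_of_nonneg volume (fun x ↦ g x *
    Complex.exp (Complex.I * ((inner ℝ x (r • H) : ℝ) : ℂ))) hr.le]
  rw [finrank_euclideanSpace_fin, Complex.real_smul]
  push_cast
  ring

lemma fderiv_fourier_apply {V E : Type*} [NormedAddCommGroup V] [InnerProductSpace ℝ V]
    [FiniteDimensional ℝ V] [MeasurableSpace V] [BorelSpace V] [NormedAddCommGroup E]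
    [NormedSpace ℂ E] {f : V → E} (hf : Integrable f) (hf' : Integrable fun x ↦ ‖x‖ * ‖f x‖)
    (w u : V) :
    fderiv ℝ (𝓕 f) w u = 𝓕 (fun x ↦ -(2 * π * Complex.I) • inner ℝ x u • f x) w := by
  have hint : Integrable (VectorFourier.fourierSMulRight (innerSL ℝ) f) := by
    refine (hf'.const_mul (2 * π * ‖innerSL ℝ (E := V)‖)).mono' hf.1.fourierSMulRight
      (.of_forall fun x ↦ ?_)
    rw [← mul_assoc]
    exact VectorFourier.norm_fourierSMulRight_le _ _ _
  rw [Real.fderiv_fourier hf hf', Real.fourier_continuousLinearMap_apply hint]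
  rfl

lemma fderiv_invFT_apply (hg : Integrable g) (hg' : Integrable fun x ↦ ‖x‖ * ‖g x‖)
    (H u : EuclideanSpace ℝ (Fin l)) :
    fderiv ℝ (invFT l g) H u = invFT l (fun x ↦ Complex.I * (inner ℝ x u : ℝ) * g x) H := by
  have hdiff : DifferentiableAt ℝ (fun H ↦ 𝓕 g (-(2 * π)⁻¹ • H)) H :=
    (Real.differentiable_fourier hg hg').fun_comp (by fun_prop) H
  rw [funext (invFT_eq_fourier g), fderiv_const_mul hdiff, fderiv_comp_smul, invFT_eq_fourier]
  rw [smul_apply, smul_apply, fderiv_fourier_apply hg hg', smul_eq_mul]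
  simp only [Real.fourier_eq']
  rw [← integral_smul]
  congr 2 with x
  simp only [smul_eq_mul, Complex.real_smul]
  push_cast
  field_simp

/-- The symbol of the constant coefficient operator `mderiv L`: under `invFT`, differentiating
along the directions of `L` corresponds to multiplication by `∏ i x_j` over `j ∈ L`. -/
noncomputable def mderivSymbol (L : List (Fin l)) (x : EuclideanSpace ℝ (Fin l)) : ℂ :=
  (L.map fun j ↦ Complex.I * (x j : ℂ)).prod

lemma contDiff_mderivSymbol (L : List (Fin l)) : ContDiff ℝ ∞ (mderivSymbol L) := by
  induction L with
  | nil => exact contDiff_const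
  | cons j L ih =>
    exact (contDiff_const.mul (Complex.ofRealCLM.contDiff.comp
      (EuclideanSpace.proj (𝕜 := ℝ) j).contDiff)).mul ih

lemma mderivSymbol_smul (L : List (Fin l)) (r : ℝ) (x : EuclideanSpace ℝ (Fin l)) :
    mderivSymbol L (r • x) = (r : ℂ) ^ L.length * mderivSymbol L x := by
  induction L with
  | nil => simp [mderivSymbol]
  | cons j L ih =>
    simp only [mderivSymbol, List.map_cons, List.prod_cons, List.length_cons] at ih ⊢
    rw [ih, PiLp.smul_apply, smul_eq_mul, Complex.ofReal_mul]
    ring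

lemma integrable_mderivSymbol_mul (hg : Integrable g) (hgc : HasCompactSupport g)
    (L : List (Fin l)) : Integrable fun x ↦ mderivSymbol L x * g x :=
  integrable_continuous_mul_of_hasCompactSupport (contDiff_mderivSymbol L).continuous hg hgc

lemma mderiv_invFT (hg : Integrable g) (hgc : HasCompactSupport g) (L : List (Fin l)) :
    mderiv L (invFT l g) = invFT l (fun x ↦ mderivSymbol L x * g x) := by
  induction L with
  | nil => simp [mderiv, mderivSymbol]
  | cons j L ih =>
    ext H
    have hLg := integrable_mderivSymbol_mul hg hgc L
    have hLg' : Integrable fun x : EuclideanSpace ℝ (Fin l) ↦ ‖x‖ * ‖mderivSymbol L x * g x‖ := by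
      simpa using (integrable_continuous_mul_of_hasCompactSupport
        (Complex.continuous_ofReal.comp continuous_norm) hLg hgc.mul_left).norm
    simp only [mderiv]
    rw [ih, fderiv_invFT_apply hLg hLg']
    simp [mderivSymbol, EuclideanSpace.inner_single_right, mul_assoc]

end InvFT

section InvFTBochnerRiesz

variable {l : ℕ} {z : ℂ}

lemma lintegral_tail_enorm_sq_invFT (g : EuclideanSpace ℝ (Fin l) → ℂ) (a : ℝ) :
    ∫⁻ H in {H | a < ‖H‖}, ‖invFT l g H‖ₑ ^ 2 =
      ENNReal.ofReal ((2 * π) ^ l)⁻¹ * ∫⁻ w in {w | (2 * π)⁻¹ * a < ‖w‖}, ‖𝓕 g w‖ₑ ^ 2 := by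
  have hconst : ‖(((2 * π) ^ l : ℝ) : ℂ)⁻¹‖ₑ = ENNReal.ofReal ((2 * π) ^ l)⁻¹ := by
    rw [← ofReal_norm, norm_inv, Complex.norm_real, norm_of_nonneg (by positivity)]
  simp only [invFT_eq_fourier, enorm_mul, hconst, mul_pow (ENNReal.ofReal _)]
  rw [lintegral_const_mul' _ _ (by finiteness),
    setLIntegral_norm_gt_comp_smul volume (fun w ↦ ‖𝓕 g w‖ₑ ^ 2) (neg_ne_zero.2 (by positivity)),
    finrank_euclideanSpace_fin, abs_neg, abs_inv (2 * π), abs_of_pos two_pi_pos, ← mul_assoc]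
  congr 1
  rw [← ENNReal.ofReal_pow (by positivity), ← ENNReal.ofReal_mul (by positivity)]
  congr 1
  rw [abs_inv, abs_pow, abs_neg, abs_of_pos (inv_pos.2 two_pi_pos), inv_pow (2 * π)]
  field_simp

lemma lintegral_tail_enorm_sq_invFT_comp_inv_smul (g : EuclideanSpace ℝ (Fin l) → ℂ) {r : ℝ}
    (hr : 0 < r) (a : ℝ) :
    ∫⁻ H in {H | a < ‖H‖}, ‖invFT l (fun x ↦ g (r⁻¹ • x)) H‖ₑ ^ 2 =
      ENNReal.ofReal (r ^ l) * ∫⁻ H in {H | r * a < ‖H‖}, ‖invFT l g H‖ₑ ^ 2 := by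
  have hpow : ‖(r : ℂ) ^ l‖ₑ = ENNReal.ofReal (r ^ l) := by
    rw [← ofReal_norm, norm_pow, Complex.norm_real, norm_of_nonneg hr.le]
  simp only [invFT_comp_inv_smul g hr, enorm_mul, mul_pow, hpow]
  rw [lintegral_const_mul' _ _ (by finiteness),
    setLIntegral_norm_gt_comp_smul volume (fun H ↦ ‖invFT l g H‖ₑ ^ 2) hr.ne',
    finrank_euclideanSpace_fin, abs_of_pos hr, abs_of_pos (by positivity), ← mul_assoc, sq,
    mul_assoc (ENNReal.ofReal _), ← ENNReal.ofReal_mul (by positivity),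
    mul_inv_cancel₀ (by positivity), ENNReal.ofReal_one, mul_one]

theorem exists_lintegral_tail_enorm_sq_invFT_bochnerRiesz_mul_le (hl : 1 ≤ l) (hz : 0 ≤ z.re)
    {q : EuclideanSpace ℝ (Fin l) → ℂ} (hq : ContDiff ℝ ∞ q) {a₀ : ℝ} (ha₀ : 0 < a₀) :
    ∃ C : ℝ≥0∞, C ≠ ⊤ ∧ ∀ a, a₀ ≤ a →
      ∫⁻ H in {H | a < ‖H‖}, ‖invFT l (fun x ↦ bochnerRiesz z x * q x) H‖ₑ ^ 2 ≤
        C * ENNReal.ofReal (a ^ (-(2 * z.re + 1))) := by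
  have : Nonempty (Fin l) := ⟨⟨0, hl⟩⟩
  obtain ⟨C, hC_top, hC⟩ := exists_lintegral_tail_enorm_sq_fourier_bochnerRiesz_mul_le hz hq
    (show 0 < (2 * π)⁻¹ * a₀ by positivity)
  refine ⟨ENNReal.ofReal ((2 * π) ^ l)⁻¹ * C * ENNReal.ofReal ((2 * π)⁻¹ ^ (-(2 * z.re + 1))),
    by finiteness, fun a ha ↦ ?_⟩
  rw [lintegral_tail_enorm_sq_invFT, mul_assoc, mul_assoc, ← ENNReal.ofReal_mul (by positivity),
    ← mul_rpow (by positivity) (ha₀.le.trans ha)]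
  gcongr
  exact hC _ (by gcongr)

lemma sRz_eq_const_mul_bochnerRiesz {ρ₀ R : ℝ} (hR : ρ₀ ^ 2 < R) (z : ℂ)
    (x : EuclideanSpace ℝ (Fin l)) :
    sRz l ρ₀ R z x =
      (((R - ρ₀ ^ 2) / R : ℝ) : ℂ) ^ z * bochnerRiesz z ((√(R - ρ₀ ^ 2))⁻¹ • x) := by
  have hR₀ : 0 < R := (sq_nonneg ρ₀).trans_lt hR
  have hM : 0 < R - ρ₀ ^ 2 := sub_pos.2 hR
  have hc : 0 < (R - ρ₀ ^ 2) / R := by positivity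
  have hfactor : 1 - (ρ₀ ^ 2 + ‖x‖ ^ 2) / R =
      (R - ρ₀ ^ 2) / R * (1 - ‖(√(R - ρ₀ ^ 2))⁻¹ • x‖ ^ 2) := by
    rw [norm_smul, mul_pow, norm_inv, inv_pow, norm_of_nonneg (sqrt_nonneg _), sq_sqrt hM.le]
    field_simp
    ring
  rw [sRz, hfactor]
  rcases le_or_gt 1 ‖(√(R - ρ₀ ^ 2))⁻¹ • x‖ with hx | hx
  · rw [bochnerRiesz_of_one_le hx, mul_zero, if_neg]
    exact not_lt.2 (mul_nonpos_of_nonneg_of_nonpos hc.le (by nlinarith))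
  · have hx' := one_sub_norm_sq_pos hx
    rw [if_pos (mul_pos hc hx'), bochnerRiesz, if_pos hx, Complex.ofReal_mul,
      Complex.mul_cpow_ofReal_nonneg hc.le hx'.le]

lemma hasCompactSupport_sRz {ρ₀ R : ℝ} (hR : ρ₀ ^ 2 < R) (z : ℂ) :
    HasCompactSupport (sRz l ρ₀ R z) := by
  rw [funext (sRz_eq_const_mul_bochnerRiesz hR z)]
  exact ((hasCompactSupport_bochnerRiesz z).comp_smul
    (inv_ne_zero (sqrt_pos.2 (sub_pos.2 hR)).ne')).mul_left

lemma integrable_sRz {ρ₀ R : ℝ} (hR : ρ₀ ^ 2 < R) (hz : 0 ≤ z.re) :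
    Integrable (sRz l ρ₀ R z) := by
  rw [funext (sRz_eq_const_mul_bochnerRiesz hR z)]
  have hint : Integrable (bochnerRiesz z : EuclideanSpace ℝ (Fin l) → ℂ) := by
    simpa using memLp_one_iff_integrable.1
      (memLp_bochnerRiesz_mul hz (continuous_const (y := (1 : ℂ))) 1
        (volume : Measure (EuclideanSpace ℝ (Fin l))))
  exact (hint.comp_smul (inv_ne_zero (sqrt_pos.2 (sub_pos.2 hR)).ne')).const_mul _

lemma mderivSymbol_mul_sRz {ρ₀ R : ℝ} (hR : ρ₀ ^ 2 < R) (z : ℂ) (L : List (Fin l))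
    (x : EuclideanSpace ℝ (Fin l)) :
    mderivSymbol L x * sRz l ρ₀ R z x =
      ((((R - ρ₀ ^ 2) / R : ℝ) : ℂ) ^ z * (√(R - ρ₀ ^ 2) : ℂ) ^ L.length) *
        (bochnerRiesz z ((√(R - ρ₀ ^ 2))⁻¹ • x) * mderivSymbol L ((√(R - ρ₀ ^ 2))⁻¹ • x)) := by
  have hr : √(R - ρ₀ ^ 2) ≠ 0 := (sqrt_pos.2 (sub_pos.2 hR)).ne'
  have hsymb := mderivSymbol_smul L (√(R - ρ₀ ^ 2)) ((√(R - ρ₀ ^ 2))⁻¹ • x)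
  rw [smul_inv_smul₀ hr] at hsymb
  rw [hsymb, sRz_eq_const_mul_bochnerRiesz hR]
  ring

theorem exists_lintegral_tail_enorm_sq_mderiv_invFT_sRz_le (hl : 1 ≤ l) (ρ₀ : ℝ) (hz : 0 ≤ z.re)
    (L : List (Fin l)) {a₀ : ℝ} (ha₀ : 0 < a₀) :
    ∃ C : ℝ≥0∞, C ≠ ⊤ ∧ ∀ R, ρ₀ ^ 2 + 1 ≤ R → ∀ a, a₀ ≤ a →
      ∫⁻ H in {H | a < ‖H‖}, ‖mderiv L (invFT l (sRz l ρ₀ R z)) H‖ₑ ^ 2 ≤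
        C * ENNReal.ofReal (√(R - ρ₀ ^ 2) ^ (2 * L.length + l) *
          (√(R - ρ₀ ^ 2) * a) ^ (-(2 * z.re + 1))) := by
  obtain ⟨C, hC_top, hC⟩ :=
    exists_lintegral_tail_enorm_sq_invFT_bochnerRiesz_mul_le hl hz (contDiff_mderivSymbol L) ha₀
  refine ⟨C, hC_top, fun R hR a ha ↦ ?_⟩
  have hR' : ρ₀ ^ 2 < R := (lt_add_one _).trans_le hR
  rw [mderiv_invFT (integrable_sRz hR' hz) (hasCompactSupport_sRz hR' z),
    funext (mderivSymbol_mul_sRz hR' z L)]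
  set r := √(R - ρ₀ ^ 2)
  have hr : 1 ≤ r := one_le_sqrt.2 (by linarith)
  have hconst : ‖(((R - ρ₀ ^ 2) / R : ℝ) : ℂ) ^ z * (r : ℂ) ^ L.length‖ₑ ^ 2 ≤
      ENNReal.ofReal (r ^ (2 * L.length)) := by
    have hR₀ : 0 < R := (sq_nonneg ρ₀).trans_lt hR'
    have hquot : 0 < (R - ρ₀ ^ 2) / R := div_pos (sub_pos.2 hR') hR₀
    rw [← ofReal_norm, ← ENNReal.ofReal_pow (norm_nonneg _), norm_mul, norm_pow, mul_comm 2,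
      pow_mul, Complex.norm_cpow_eq_rpow_re_of_pos hquot, Complex.norm_of_nonneg (by positivity)]
    gcongr
    refine mul_le_of_le_one_left (by positivity) (rpow_le_one hquot.le ?_ hz)
    exact div_le_one_of_le₀ (sub_le_self R (sq_nonneg ρ₀)) hR₀.le
  simp only [invFT_const_mul, enorm_mul (_ * _), mul_pow]
  rw [lintegral_const_mul' _ _ (by finiteness), lintegral_tail_enorm_sq_invFT_comp_inv_smul
    (fun x ↦ bochnerRiesz z x * mderivSymbol L x) (by positivity)]
  calc _ ≤ ENNReal.ofReal (r ^ (2 * L.length)) *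
        (ENNReal.ofReal (r ^ l) * (C * ENNReal.ofReal ((r * a) ^ (-(2 * z.re + 1))))) := by
        gcongr
        exact hC _ (ha.trans (le_mul_of_one_le_left (ha₀.le.trans ha) hr))
    _ = _ := by
        rw [pow_add, mul_assoc (r ^ _), ENNReal.ofReal_mul (by positivity),
          ENNReal.ofReal_mul (by positivity)]
        ring

end InvFTBochnerRiesz

lemma rpow_le_rpow_abs_mul_rpow {x y c : ℝ} (hx : 0 < x) (hxy : x ≤ y) (hy : y ≤ c * x) (e : ℝ) :
    x ^ e ≤ c ^ |e| * y ^ e := by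
  have hc : 1 ≤ c := (le_mul_iff_one_le_left hx).1 (hxy.trans hy)
  have hy₀ : 0 < y := hx.trans_le hxy
  rcases le_total 0 e with he | he
  · exact (rpow_le_rpow hx.le hxy he).trans
      (le_mul_of_one_le_left (by positivity) (one_le_rpow hc (abs_nonneg e)))
  · rw [abs_of_nonpos he, rpow_neg (by positivity), ← inv_rpow (by positivity),
      ← mul_rpow (by positivity) hy₀.le]
    exact rpow_le_rpow_of_nonpos (by positivity) ((inv_mul_le_iff₀ (by positivity)).2 hy) he

section SqrtIntegral

variable {ι α E : Type*} [MeasurableSpace α] {μ : Measure α} [NormedAddCommGroup E]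

lemma integral_norm_sq_eq_lintegral_enorm_sq {f : α → E} (hf : AEStronglyMeasurable f μ) :
    ∫ x, ‖f x‖ ^ 2 ∂μ = (∫⁻ x, ‖f x‖ₑ ^ 2 ∂μ).toReal := by
  simpa [enorm_pow] using integral_norm_eq_lintegral_enorm (hf.norm.pow 2)

lemma sqrt_integral_sq_sum_norm_le (s : Finset ι) {f : ι → α → E}
    (hf : ∀ i ∈ s, AEStronglyMeasurable (f i) μ) {C : ι → ℝ≥0∞} (hC : ∀ i ∈ s, C i ≠ ⊤) {b : ℝ}
    (hb : 0 ≤ b) (hfC : ∀ i ∈ s, ∫⁻ x, ‖f i x‖ₑ ^ 2 ∂μ ≤ C i * ENNReal.ofReal (b ^ 2)) :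
    √(∫ x, (∑ i ∈ s, ‖f i x‖) ^ 2 ∂μ) ≤ √(s.card * ∑ i ∈ s, (C i).toReal) * b := by
  have hC' (i) (hi : i ∈ s) : C i * ENNReal.ofReal (b ^ 2) ≠ ⊤ :=
    ENNReal.mul_ne_top (hC i hi) ENNReal.ofReal_ne_top
  have hint (i) (hi : i ∈ s) : Integrable (fun x ↦ ‖f i x‖ ^ 2) μ := by
    refine ⟨(hf i hi).norm.pow 2, ?_⟩
    simpa [HasFiniteIntegral, enorm_pow] using (hfC i hi).trans_lt (hC' i hi).lt_top
  have hbound (i) (hi : i ∈ s) : ∫ x, ‖f i x‖ ^ 2 ∂μ ≤ (C i).toReal * b ^ 2 := by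
    rw [integral_norm_sq_eq_lintegral_enorm_sq (hf i hi)]
    simpa [ENNReal.toReal_ofReal (sq_nonneg b)] using ENNReal.toReal_mono (hC' i hi) (hfC i hi)
  rw [← sqrt_sq hb, ← sqrt_mul (by positivity)]
  refine sqrt_le_sqrt ?_
  calc ∫ x, (∑ i ∈ s, ‖f i x‖) ^ 2 ∂μ
      ≤ ∫ x, s.card * ∑ i ∈ s, ‖f i x‖ ^ 2 ∂μ :=
        integral_mono_of_nonneg (.of_forall fun x ↦ sq_nonneg _)
          ((integrable_finsetSum s hint).const_mul _)
          (.of_forall fun x ↦ sq_sum_le_card_mul_sum_sq)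
    _ = s.card * ∑ i ∈ s, ∫ x, ‖f i x‖ ^ 2 ∂μ := by
        rw [integral_const_mul, integral_finsetSum s hint]
    _ ≤ s.card * ∑ i ∈ s, (C i).toReal * b ^ 2 := by
        gcongr with i hi
        exact hbound i hi
    _ = s.card * (∑ i ∈ s, (C i).toReal) * b ^ 2 := by rw [← Finset.sum_mul, mul_assoc]

end SqrtIntegral

section PartialD

variable {l : ℕ}

lemma length_flatMap_replicate_finRange (α : Fin l → ℕ) :
    ((List.finRange l).flatMap fun i ↦ List.replicate (α i) i).length = ∑ i, α i := by
  simp [List.length_flatMap, Fin.sum_univ_def]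

lemma continuous_mderiv_invFT {g : EuclideanSpace ℝ (Fin l) → ℂ} (hg : Integrable g)
    (hgc : HasCompactSupport g) (L : List (Fin l)) : Continuous (mderiv L (invFT l g)) := by
  rw [mderiv_invFT hg hgc]
  exact continuous_invFT (integrable_mderivSymbol_mul hg hgc L)

lemma sqrt_sub_sq_pow_mul_rpow_le {ρ₀ R a σ : ℝ} {m : ℕ} (hR : ρ₀ ^ 2 + 1 ≤ R) (ha : 0 < a) :
    √(R - ρ₀ ^ 2) ^ m * (√(R - ρ₀ ^ 2) * a) ^ (-(2 * σ + 1)) ≤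
      (1 + ρ₀ ^ 2) ^ |(m - (2 * σ + 1)) / 2| *
        (R ^ ((m - (2 * σ + 1)) / 4) * a ^ (-σ - 1 / 2)) ^ 2 := by
  have : 1 ≤ R - ρ₀ ^ 2 := by linarith
  have hR₀ : 0 < R := by nlinarith [sq_nonneg ρ₀]
  have hr : 0 < √(R - ρ₀ ^ 2) := sqrt_pos.2 (by linarith)
  set e : ℝ := (m - (2 * σ + 1)) / 2
  have hsqrt : √(R - ρ₀ ^ 2) ^ m * √(R - ρ₀ ^ 2) ^ (-(2 * σ + 1)) = (R - ρ₀ ^ 2) ^ e := by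
    rw [← rpow_natCast, ← rpow_add hr, sqrt_eq_rpow, ← rpow_mul (by linarith)]
    congr 1
    ring
  have hRe : (R ^ ((m - (2 * σ + 1)) / 4)) ^ 2 = R ^ e := by
    rw [← rpow_mul_natCast hR₀.le]
    congr 1
    push_cast
    ring
  have hae : (a ^ (-σ - 1 / 2)) ^ 2 = a ^ (-(2 * σ + 1)) := by
    rw [← rpow_mul_natCast ha.le]
    congr 1
    push_cast
    ring
  rw [mul_rpow hr.le ha.le, ← mul_assoc, hsqrt, mul_pow, hRe, hae, ← mul_assoc]
  gcongr
  exact rpow_le_rpow_abs_mul_rpow (by linarith) (sub_le_self R (sq_nonneg ρ₀))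
    (by nlinarith [sq_nonneg ρ₀]) e

theorem exists_lintegral_tail_enorm_sq_partialD_invFT_sRz_le (hl : 1 ≤ l) (ρ₀ : ℝ) {z : ℂ}
    (hz : 0 ≤ z.re) {α : Fin l → ℕ} {n : ℕ} (hα : ∑ i, α i ≤ n) {a₀ : ℝ} (ha₀ : 0 < a₀) :
    ∃ C : ℝ≥0∞, C ≠ ⊤ ∧ ∀ R, ρ₀ ^ 2 + 1 ≤ R → ∀ a, a₀ ≤ a →
      ∫⁻ H in {H | a < ‖H‖}, ‖partialD α (invFT l (sRz l ρ₀ R z)) H‖ₑ ^ 2 ≤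
        C * ENNReal.ofReal
          ((R ^ (-(z.re - (n + (l : ℝ) / 2) + 1 / 2) / 2) * a ^ (-z.re - 1 / 2)) ^ 2) := by
  obtain ⟨C, hC_top, hC⟩ := exists_lintegral_tail_enorm_sq_mderiv_invFT_sRz_le hl ρ₀ hz
    ((List.finRange l).flatMap fun i ↦ List.replicate (α i) i) ha₀
  set K : ℝ := (1 + ρ₀ ^ 2) ^ |((2 * n + l : ℕ) - (2 * z.re + 1)) / 2|
  refine ⟨C * ENNReal.ofReal K, by finiteness, fun R hR a ha ↦ (hC R hR a ha).trans ?_⟩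
  have ha_pos : 0 < a := ha₀.trans_le ha
  have hr : 1 ≤ √(R - ρ₀ ^ 2) := one_le_sqrt.2 (by linarith)
  rw [mul_assoc, ← ENNReal.ofReal_mul (by positivity), length_flatMap_replicate_finRange]
  gcongr C * ENNReal.ofReal ?_
  calc √(R - ρ₀ ^ 2) ^ (2 * ∑ i, α i + l) * (√(R - ρ₀ ^ 2) * a) ^ (-(2 * z.re + 1))
      ≤ √(R - ρ₀ ^ 2) ^ (2 * n + l) * (√(R - ρ₀ ^ 2) * a) ^ (-(2 * z.re + 1)) := by gcongr
    _ ≤ _ := sqrt_sub_sq_pow_mul_rpow_le hR ha_pos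
    _ = _ := by
        congr 4
        push_cast
        ring

end PartialD

/-- L² tail estimate for sums of multi-index derivatives of ℱ^{−1}s_R^z, for R ≥ ρ₀² + 1
and a ≥ 1/2:
(∫_{‖H‖>a} (Σ_{|α|≤2k} |∂^α(ℱ^{−1}s_R^z)(H)|)² dH)^{1/2}
  ≤ c R^{−(Re z − (2k + l/2) + 1/2)/2} a^{−Re z − 1/2}. -/
theorem invFT_sRz_L2_tail (l k : ℕ) (hl : 1 ≤ l) (ρ₀ : ℝ) (hρ : 0 ≤ ρ₀)
    (z : ℂ) (hz : 0 ≤ z.re) :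
    ∃ c : ℝ, 0 < c ∧ ∀ R : ℝ, ρ₀ ^ 2 + 1 ≤ R → ∀ a : ℝ, 1 / 2 ≤ a →
      Real.sqrt (∫ H in {H : EuclideanSpace ℝ (Fin l) | a < ‖H‖},
          (∑ α ∈ Finset.univ.filter
              (fun α : Fin l → Fin (2 * k + 1) => (∑ i, (α i : ℕ)) ≤ 2 * k),
            ‖partialD (fun i => (α i : ℕ)) (invFT l (sRz l ρ₀ R z)) H‖) ^ 2) ≤
        c * R ^ (-(z.re - (2 * k + (l : ℝ) / 2) + 1 / 2) / 2) * a ^ (-z.re - 1 / 2) := by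
  set s := Finset.univ.filter fun α : Fin l → Fin (2 * k + 1) => (∑ i, (α i : ℕ)) ≤ 2 * k
  choose! C hC_top hC using fun (α : Fin l → Fin (2 * k + 1)) (hα : α ∈ s) ↦
    exists_lintegral_tail_enorm_sq_partialD_invFT_sRz_le hl ρ₀ hz (Finset.mem_filter.1 hα).2
      one_half_pos
  set K := √(s.card * ∑ α ∈ s, (C α).toReal)
  refine ⟨K + 1, by positivity, fun R hR a ha ↦ ?_⟩
  have hR' : ρ₀ ^ 2 < R := (lt_add_one _).trans_le hR
  have hR₀ : 0 < R := (sq_nonneg ρ₀).trans_lt hR'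
  have : 0 < a := one_half_pos.trans_le ha
  rw [mul_assoc]
  refine (sqrt_integral_sq_sum_norm_le s (b := R ^ (-(z.re - (2 * k + (l : ℝ) / 2) + 1 / 2) / 2) *
    a ^ (-z.re - 1 / 2)) (fun α _ ↦ ?_) hC_top (by positivity) fun α hα ↦ ?_).trans ?_
  · exact (continuous_mderiv_invFT (integrable_sRz hR' hz)
      (hasCompactSupport_sRz hR' z) _).aestronglyMeasurable
  · simpa using hC α hα R hR a ha
  · gcongr
    exact (lt_add_one K).le
end
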